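/- arXiv:1012.5152 — 2 statements merged into one kernel-verified Lean document; each statement's English description precedes it below -/
import Mathlib

section
/- There exists a constant K > 0, depending only on A, φ, μ and the chosen Haar family, such that every a ∈ H₀ satisfying ‖D(a·h) − a·D(h)‖_{L²(μ)} ≤ ‖h‖_{L²(μ)} for all h ∈ H₀ obeys ‖a − (∫_{Σ_A} a dμ)·1‖_∞ ≤ K, where 1 is the constant function one and ‖·‖_∞ is the supremum norm on Σ_A. -/
open MeasureTheory Filter
open scoped ENNReal NNReal

namespace SFT

variable {l : ℕ}

/-- The one-sided subshift of finite type determined by the `l × l` matrix `A`: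
infinite sequences with transitions allowed by `A`. -/
abbrev SigmaA (l : ℕ) (A : Matrix (Fin l) (Fin l) ℕ) : Type :=
  {ω : ℕ → Fin l // ∀ k, A (ω k) (ω (k + 1)) = 1}

/-- The left shift `σ` on `SigmaA l A`. -/
def shift {A : Matrix (Fin l) (Fin l) ℕ} (ω : SigmaA l A) : SigmaA l A :=
  ⟨fun n => ω.1 (n + 1), fun k => ω.2 (k + 1)⟩

/-- Birkhoff sums `S_k φ = ∑_{m<k} φ ∘ σ^m`. -/
def birkhoff {A : Matrix (Fin l) (Fin l) ℕ} (φ : SigmaA l A → ℝ) (k : ℕ) (ω : SigmaA l A) : ℝ :=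
  ∑ m ∈ Finset.range k, φ (shift^[m] ω)

/-- The matrix `A` has `0`-`1` entries and is irreducible and aperiodic
(some power of `A` has all entries strictly positive). -/
def Primitive (A : Matrix (Fin l) (Fin l) ℕ) : Prop :=
  (∀ i j, A i j = 0 ∨ A i j = 1) ∧ ∃ n : ℕ, 0 < n ∧ ∀ i j, 0 < (A ^ n) i j

/-- A finite word is admissible, i.e. belongs to `Σ_A^*`. -/
def Admissible (A : Matrix (Fin l) (Fin l) ℕ) (x : List (Fin l)) : Prop :=
  x ≠ [] ∧ ∀ (i : ℕ) (h : i + 1 < x.length), A (x[i]'(by omega)) (x[i + 1]'h) = 1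

/-- The cylinder set `[x]` of a finite word (the empty word gives all of `Σ_A`). -/
def cylinder (A : Matrix (Fin l) (Fin l) ℕ) (x : List (Fin l)) : Set (SigmaA l A) :=
  {ω | ∀ (i : ℕ) (h : i < x.length), ω.1 i = x[i]'h}

/-- The initial word `(ω_1, …, ω_k)` of `ω`. -/
def wordPrefix {A : Matrix (Fin l) (Fin l) ℕ} (ω : SigmaA l A) (k : ℕ) : List (Fin l) :=
  List.ofFn (fun i : Fin k => ω.1 i)

/-- `μ` is a Gibbs measure for the potential `φ` with pressure `P`:
`c⁻¹ ≤ μ([ω_1,…,ω_k]) / exp(S_kφ(ω) − kP) ≤ c` for some `c > 1`. -/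
def IsGibbs {A : Matrix (Fin l) (Fin l) ℕ} (φ : SigmaA l A → ℝ) (P : ℝ)
    (μ : Measure (SigmaA l A)) : Prop :=
  ∃ c : ℝ, 1 < c ∧ ∀ (ω : SigmaA l A) (k : ℕ), 0 < k →
    c⁻¹ ≤ (μ (cylinder A (wordPrefix ω k))).toReal / Real.exp (birkhoff φ k ω - k * P) ∧
      (μ (cylinder A (wordPrefix ω k))).toReal / Real.exp (birkhoff φ k ω - k * P) ≤ c

/-- `φ` is Hölder continuous with respect to the metric `d(ω,υ) = 2^{-(ω ∧ υ)}`: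
there are `C` and an exponent `s > 0` with `|φ(ω) − φ(υ)| ≤ C ⬝ d(ω,υ)^s`, i.e.
`|φ(ω) − φ(υ)| ≤ C ⬝ 2^{-sn}` whenever `ω` and `υ` agree in their first `n` coordinates. -/
def HolderCont {A : Matrix (Fin l) (Fin l) ℕ} (φ : SigmaA l A → ℝ) : Prop :=
  ∃ C s : ℝ, 0 < s ∧ ∀ (ω υ : SigmaA l A) (n : ℕ),
    (∀ i < n, ω.1 i = υ.1 i) → |φ ω - φ υ| ≤ C * (2 : ℝ) ^ (-(s * n))

/-- `α(x)`: the number of children of the word `x` (the row sum of `A` at the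
last letter of `x`). -/
def alpha (A : Matrix (Fin l) (Fin l) ℕ) (x : List (Fin l)) : ℕ :=
  match x.getLast? with
  | some a => ∑ i, A a i
  | none => 0

/-- The `m`-th child `x θ_x⁻¹(m)` of the word `x`, the ordering of the children
being given by `θinv x`. -/
def child (θinv : List (Fin l) → ℕ → Fin l) (x : List (Fin l)) (m : ℕ) : List (Fin l) :=
  x ++ [θinv x m]

/-- The characteristic function of the cylinder `[x]`, as a function on `Σ_A`. -/
noncomputable def indC (A : Matrix (Fin l) (Fin l) ℕ) (x : List (Fin l)) : SigmaA l A → ℂ :=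
  (cylinder A x).indicator 1

/-- The `L²(μ)` inner product of two functions (conjugate linear in the first slot). -/
noncomputable def innerMu (A : Matrix (Fin l) (Fin l) ℕ) (μ : Measure (SigmaA l A))
    (f g : SigmaA l A → ℂ) : ℂ :=
  ∫ ω, (starRingEnd ℂ) (f ω) * g ω ∂μ

/-- The Haar function `e_{x,j} = ∑_m μ([xθ_x⁻¹(m)])^{-1/2} ⟨f_{x,m}, U_x f_{x,j}⟩_x χ_{[xθ_x⁻¹(m)]}`
as a function on `Σ_A`; here `u x m j = ⟨f_{x,m}, U_x f_{x,j}⟩_x` are the matrix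
coefficients of `U_x` in the orthonormal basis `(f_{x,m})_m`. -/
noncomputable def haarFun (A : Matrix (Fin l) (Fin l) ℕ) (μ : Measure (SigmaA l A))
    (θinv : List (Fin l) → ℕ → Fin l) (u : List (Fin l) → ℕ → ℕ → ℝ)
    (x : List (Fin l)) (j : ℕ) : SigmaA l A → ℂ := fun ω =>
  ∑ m ∈ Finset.range (alpha A x),
    ((((Real.sqrt ((μ (cylinder A (child θinv x m))).toReal))⁻¹ * u x m j : ℝ) : ℂ)) *
      indC A (child θinv x m) ω

/-- `H₀`: the complex linear span of the characteristic functions of cylinder sets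
of admissible words, together with `χ_{Σ_A}` (the cylinder of the empty word). -/
noncomputable def H0 (A : Matrix (Fin l) (Fin l) ℕ) : Submodule ℂ (SigmaA l A → ℂ) :=
  Submodule.span ℂ {f | ∃ x : List (Fin l), (x = [] ∨ Admissible A x) ∧ f = indC A x}

/-- The operator `D` (the Dirac operator on the dense domain `H₀`, extended to all
functions by the same formula; on `H₀` all but finitely many summands vanish). -/
noncomputable def Dop (A : Matrix (Fin l) (Fin l) ℕ) (μ : Measure (SigmaA l A))
    (θinv : List (Fin l) → ℕ → Fin l) (u : List (Fin l) → ℕ → ℕ → ℝ)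
    (h : SigmaA l A → ℂ) : SigmaA l A → ℂ := fun ω =>
  (∑ a : Fin l,
      (((μ (cylinder A [a])).toReal : ℂ))⁻¹ * innerMu A μ (indC A [a]) h * indC A [a] ω)
    - innerMu A μ (indC A []) h * indC A [] ω
    + ∑' y : List (Fin l),
        Set.indicator {y : List (Fin l) | Admissible A y}
          (fun y => ((((alpha A y : ℝ) - 1) / (μ (cylinder A y)).toReal : ℝ) : ℂ) *
            ∑ j ∈ Finset.range (alpha A y - 1),
              innerMu A μ (haarFun A μ θinv u y j) h * haarFun A μ θinv u y j ω) y

/-! ### Combinatorics of words and cylinders -/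

section Words

variable {A : Matrix (Fin l) (Fin l) ℕ}

lemma mem_cylinder_append_singleton (x : List (Fin l)) (b : Fin l) (ω : SigmaA l A) :
    ω ∈ cylinder A (x ++ [b]) ↔ ω ∈ cylinder A x ∧ ω.1 x.length = b := by
  simp only [cylinder, Set.mem_ofPred_eq]
  constructor
  · intro h
    refine ⟨fun i hi => ?_, ?_⟩
    · rw [h i (by simp; omega), List.getElem_append_left hi]
    · rw [h x.length (by simp)]
      simp
  · rintro ⟨h, hb⟩ i hi
    rcases lt_or_ge i x.length with hlt | hge
    · rw [h i hlt, List.getElem_append_left hlt]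
    · obtain rfl : i = x.length := by simp at hi; omega
      simp [hb]

lemma mem_cylinder_wordPrefix (ω υ : SigmaA l A) (k : ℕ) :
    υ ∈ cylinder A (wordPrefix ω k) ↔ ∀ i < k, υ.1 i = ω.1 i := by
  simp [cylinder, wordPrefix]

lemma length_wordPrefix (ω : SigmaA l A) (k : ℕ) : (wordPrefix ω k).length = k := by
  simp [wordPrefix]

lemma self_mem_cylinder_wordPrefix (ω : SigmaA l A) (k : ℕ) :
    ω ∈ cylinder A (wordPrefix ω k) := by
  simp [mem_cylinder_wordPrefix]

lemma wordPrefix_succ (ω : SigmaA l A) (k : ℕ) :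
    wordPrefix ω (k + 1) = wordPrefix ω k ++ [ω.1 k] := by
  rw [wordPrefix, List.ofFn_succ_last]
  rfl

lemma admissible_wordPrefix (ω : SigmaA l A) {k : ℕ} (hk : 0 < k) :
    Admissible A (wordPrefix ω k) := by
  refine ⟨fun h => ?_, fun i hi => ?_⟩
  · have := length_wordPrefix ω k
    rw [h] at this
    simp at this
    omega
  · simpa [wordPrefix] using ω.2 i

lemma admissible_singleton (b : Fin l) : Admissible A [b] :=
  ⟨by simp, fun i hi => by simp at hi⟩

lemma getLast_eq_of_mem_cylinder {x : List (Fin l)} (hx : x ≠ []) {ω : SigmaA l A}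
    (hω : ω ∈ cylinder A x) : x.getLast hx = ω.1 (x.length - 1) := by
  have : 0 < x.length := List.length_pos_iff.2 hx
  rw [List.getLast_eq_getElem, hω (x.length - 1) (by omega)]

lemma getLast_transition {x : List (Fin l)} (hx : x ≠ []) {ω : SigmaA l A}
    (hω : ω ∈ cylinder A x) : A (x.getLast hx) (ω.1 x.length) = 1 := by
  have h0 : 0 < x.length := List.length_pos_iff.2 hx
  have h := ω.2 (x.length - 1)
  rwa [Nat.sub_add_cancel h0, ← getLast_eq_of_mem_cylinder hx hω] at h

lemma admissible_append_singleton {x : List (Fin l)} (hx : Admissible A x) {b : Fin l}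
    (hb : A (x.getLast hx.1) b = 1) : Admissible A (x ++ [b]) := by
  refine ⟨by simp, fun i hi => ?_⟩
  simp only [List.length_append, List.length_singleton] at hi
  rcases lt_or_ge (i + 1) x.length with h | h
  · rw [List.getElem_append_left (by omega), List.getElem_append_left h]
    exact hx.2 i h
  · have e : i = x.length - 1 := by omega
    rw [List.getElem_append_left (by omega), List.getElem_append_right (by omega)]
    rw [List.getLast_eq_getElem] at hb
    simpa [e] using hb

lemma alpha_le (hA : Primitive A) (x : List (Fin l)) : alpha A x ≤ l := by
  unfold alpha
  split
  · rename_i a _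
    calc ∑ i, A a i ≤ ∑ _i : Fin l, 1 :=
          Finset.sum_le_sum fun i _ => by rcases hA.1 a i with h | h <;> omega
      _ = l := by simp
  · omega

/-- An admissible finite path followed by an admissible sequence starting at its endpoint. -/
lemma exists_splice (f : ℕ → Fin l) (p : ℕ) (hf : ∀ k < p, A (f k) (f (k + 1)) = 1)
    (υ : SigmaA l A) (hυ : υ.1 0 = f p) :
    ∃ ω : SigmaA l A, (∀ m ≤ p, ω.1 m = f m) ∧ ∀ m, ω.1 (p + m) = υ.1 m := by
  refine ⟨⟨fun m => if m < p then f m else υ.1 (m - p), fun k => ?_⟩, fun m hm => ?_,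
    fun m => ?_⟩
  · rcases lt_trichotomy (k + 1) p with h | h | h
    · simpa [h, show k < p by omega] using hf k (by omega)
    · have := hf k (by omega)
      simpa [h, show k < p by omega, hυ] using this
    · have e : k + 1 - p = (k - p) + 1 := by omega
      simpa [show ¬ k < p by omega, show ¬ k + 1 < p by omega, e] using υ.2 (k - p)
  · rcases hm.lt_or_eq with h | h
    · simp [h]
    · simp [h, hυ]
  · simp

lemma exists_successor (hA : Primitive A) (i : Fin l) : ∃ j, A i j = 1 := by
  obtain ⟨h01, n, hn, hpos⟩ := hA
  by_contra! hne
  have h0 : ∀ j, A i j = 0 := fun j => (h01 i j).resolve_right (hne j)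
  obtain ⟨n, rfl⟩ : ∃ m, n = m + 1 := ⟨n - 1, by omega⟩
  have := hpos i i
  rw [pow_succ', Matrix.mul_apply] at this
  simp [h0] at this

lemma exists_start (hA : Primitive A) (i : Fin l) : ∃ ω : SigmaA l A, ω.1 0 = i := by
  choose s hs using exists_successor hA
  exact ⟨⟨fun n => s^[n] i, fun k => by simp only [Function.iterate_succ_apply']; exact hs _⟩, rfl⟩

lemma exists_path (hA : Primitive A) (n : ℕ) (i j : Fin l) (h : 0 < (A ^ n) i j) :
    ∃ ω : SigmaA l A, ω.1 0 = i ∧ ω.1 n = j := by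
  induction n generalizing i with
  | zero =>
    have hij : i = j := by
      by_contra hne
      simp [Matrix.one_apply_ne hne] at h
    obtain ⟨ω, hω⟩ := exists_start hA i
    exact ⟨ω, hω, hω.trans hij⟩
  | succ n ih =>
    rw [pow_succ', Matrix.mul_apply] at h
    obtain ⟨k, -, hk⟩ := Finset.exists_ne_zero_of_sum_ne_zero h.ne'
    have hk1 : A i k = 1 := (hA.1 i k).resolve_left (left_ne_zero_of_mul hk)
    obtain ⟨υ, hυ0, hυn⟩ := ih k (Nat.pos_of_ne_zero (right_ne_zero_of_mul hk))
    obtain ⟨ω, hω, hω'⟩ := exists_splice (A := A) (fun m => if m = 0 then i else k) 1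
      (fun m hm => by obtain rfl : m = 0 := by omega
                      simpa using hk1) υ (by simpa using hυ0)
    refine ⟨ω, by simpa using hω 0 (by omega), ?_⟩
    rw [add_comm, hω' n, hυn]

lemma exists_wordPrefix_eq (hA : Primitive A) {x : List (Fin l)} (hx : Admissible A x) :
    ∃ ω : SigmaA l A, wordPrefix ω x.length = x := by
  have h0 : 0 < x.length := List.length_pos_iff.2 hx.1
  obtain ⟨υ, hυ⟩ := exists_start hA (x.getLast hx.1)
  obtain ⟨ω, hω, -⟩ := exists_splice (A := A) (fun m => x.getD m (x.getLast hx.1)) (x.length - 1)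
    (fun k hk => by
      simpa [List.getD_eq_getElem, show k < x.length by omega, show k + 1 < x.length by omega]
        using hx.2 k (by omega)) υ (by
      rw [hυ, List.getD_eq_getElem _ _ (by omega), List.getLast_eq_getElem])
  refine ⟨ω, List.ext_getElem (length_wordPrefix _ _) fun i h1 h2 => ?_⟩
  have := hω i (by omega)
  rw [List.getD_eq_getElem _ _ h2] at this
  simpa [wordPrefix] using this

/-- Every sequence can be modified after position `p` so as to differ at position `p + n`. -/
lemma exists_branch (hl : 2 ≤ l) (hA : Primitive A) {n : ℕ} (hn : ∀ i j, 0 < (A ^ n) i j)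
    (ω : SigmaA l A) (p : ℕ) :
    ∃ υ : SigmaA l A, (∀ m ≤ p, υ.1 m = ω.1 m) ∧ υ.1 (p + n) ≠ ω.1 (p + n) := by
  have : Nontrivial (Fin l) := Fin.nontrivial_iff_two_le.2 hl
  obtain ⟨j, hj⟩ := exists_ne (ω.1 (p + n))
  obtain ⟨υ, hυ0, hυn⟩ := exists_path hA n (ω.1 p) j (hn _ _)
  obtain ⟨τ, hτ, hτ'⟩ := exists_splice (A := A) ω.1 p (fun k _ => ω.2 k) υ hυ0
  exact ⟨τ, hτ, by rw [hτ', hυn]; exact hj⟩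

end Words

/-! ### Consequences of the Gibbs property -/

section Gibbs

variable {A : Matrix (Fin l) (Fin l) ℕ} {μ : Measure (SigmaA l A)} {φ : SigmaA l A → ℝ} {P : ℝ}

lemma measurableSet_cylinder (x : List (Fin l)) : MeasurableSet (cylinder A x) := by
  have : cylinder A x = ⋂ i : Fin x.length, (fun ω : SigmaA l A => ω.1 i) ⁻¹' {x[i]} := by
    ext ω
    simp only [cylinder, Set.mem_ofPred_eq, Set.mem_iInter, Set.mem_preimage,
      Set.mem_singleton_iff]
    exact ⟨fun h i => h i i.2, fun h i hi => h ⟨i, hi⟩⟩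
  rw [this]
  refine MeasurableSet.iInter fun i => ?_
  exact ((measurable_pi_apply (i : ℕ)).comp measurable_subtype_coe) (measurableSet_singleton _)

lemma IsGibbs.cylinder_pos (hG : IsGibbs φ P μ) (hA : Primitive A) {x : List (Fin l)}
    (hx : Admissible A x) : 0 < (μ (cylinder A x)).toReal := by
  obtain ⟨ω, hω⟩ := exists_wordPrefix_eq hA hx
  obtain ⟨c, hc, h⟩ := hG
  have h1 := (h ω x.length (List.length_pos_iff.2 hx.1)).1
  rw [hω] at h1
  have h2 : 0 < c⁻¹ := by positivity
  have h3 := h2.trans_le h1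
  rwa [div_pos_iff_of_pos_right (Real.exp_pos _)] at h3

lemma birkhoff_add_ge {M : ℝ} (hM : ∀ ω, -M ≤ φ ω) (k t : ℕ) (ω : SigmaA l A) :
    birkhoff φ k ω - t * M ≤ birkhoff φ (k + t) ω := by
  unfold birkhoff
  rw [Finset.sum_range_add]
  have : (t : ℝ) * (-M) ≤ ∑ x ∈ Finset.range t, φ (shift^[k + x] ω) := by
    simpa using Finset.card_nsmul_le_sum (Finset.range t) (fun x => φ (shift^[k + x] ω)) (-M)
      (fun x _ => hM _)
  linarith

lemma HolderCont.exists_lower_bound (hφ : HolderCont φ) : ∃ M : ℝ, ∀ ω, -M ≤ φ ω := by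
  rcases isEmpty_or_nonempty (SigmaA l A) with h | ⟨⟨ω₀⟩⟩
  · exact ⟨0, fun ω => h.elim ω⟩
  · obtain ⟨C, s, -, h⟩ := hφ
    refine ⟨C - φ ω₀, fun ω => ?_⟩
    have := h ω ω₀ 0 (by simp)
    simp only [Nat.cast_zero, mul_zero, neg_zero, Real.rpow_zero, mul_one] at this
    linarith [neg_abs_le (φ ω - φ ω₀)]

lemma IsGibbs.exists_ratio (hG : IsGibbs φ P μ) (hφ : HolderCont φ) :
    ∃ δ : ℕ → ℝ, (∀ t, 0 < δ t) ∧ ∀ (ω : SigmaA l A) (k t : ℕ), 0 < k →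
      δ t * (μ (cylinder A (wordPrefix ω k))).toReal ≤
        (μ (cylinder A (wordPrefix ω (k + t)))).toReal := by
  obtain ⟨M, hM⟩ := hφ.exists_lower_bound
  obtain ⟨c, hc, h⟩ := hG
  have hc0 : 0 < c := by linarith
  refine ⟨fun t => c⁻¹ * Real.exp (-(t * M) - t * P) * c⁻¹, fun t => by positivity,
    fun ω k t hk => ?_⟩
  have h1 := (h ω k hk).2
  have h2 := (h ω (k + t) (by omega)).1
  rw [div_le_iff₀ (Real.exp_pos _)] at h1
  rw [le_div_iff₀ (Real.exp_pos _)] at h2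
  refine le_trans ?_ h2
  have h3 : Real.exp (-(t * M) - t * P) * Real.exp (birkhoff φ k ω - k * P) ≤
      Real.exp (birkhoff φ (k + t) ω - ((k + t : ℕ) : ℝ) * P) := by
    rw [← Real.exp_add, Real.exp_le_exp]
    have := birkhoff_add_ge hM k t ω
    push_cast
    linarith
  calc c⁻¹ * Real.exp (-(t * M) - t * P) * c⁻¹ * (μ (cylinder A (wordPrefix ω k))).toReal
      ≤ c⁻¹ * Real.exp (-(t * M) - t * P) * c⁻¹ *
          (c * Real.exp (birkhoff φ k ω - k * P)) := by gcongr
    _ = c⁻¹ * (Real.exp (-(t * M) - t * P) * Real.exp (birkhoff φ k ω - k * P)) := by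
        field_simp
    _ ≤ _ := by gcongr

lemma IsGibbs.exists_decay [IsProbabilityMeasure μ] (hl : 2 ≤ l) (hA : Primitive A)
    (hG : IsGibbs φ P μ) (hφ : HolderCont φ) :
    ∃ (r : ℝ) (n : ℕ), 0 ≤ r ∧ r < 1 ∧ ∀ (ω : SigmaA l A) (k : ℕ), 0 < k →
      (μ (cylinder A (wordPrefix ω (k + n)))).toReal ≤
        r * (μ (cylinder A (wordPrefix ω k))).toReal := by
  obtain ⟨δ, hδ, h⟩ := hG.exists_ratio hφ
  obtain ⟨n, -, hn⟩ := hA.2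
  refine ⟨max 0 (1 - δ n), n, le_max_left _ _, by simp [hδ n], fun ω k hk => ?_⟩
  obtain ⟨υ, hυ, hne⟩ := exists_branch hl hA hn ω (k - 1)
  have hsame : cylinder A (wordPrefix υ k) = cylinder A (wordPrefix ω k) := by
    ext τ
    simp only [mem_cylinder_wordPrefix]
    exact forall₂_congr fun i hi => by rw [hυ i (by omega)]
  have hdisj : Disjoint (cylinder A (wordPrefix ω (k + n))) (cylinder A (wordPrefix υ (k + n))) := by
    rw [Set.disjoint_left]
    intro τ h1 h2
    rw [mem_cylinder_wordPrefix] at h1 h2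
    exact hne ((h2 (k - 1 + n) (by omega)).symm.trans (h1 (k - 1 + n) (by omega)))
  have hsub : cylinder A (wordPrefix ω (k + n)) ∪ cylinder A (wordPrefix υ (k + n)) ⊆
      cylinder A (wordPrefix ω k) := by
    rintro τ (h1 | h1)
    · rw [mem_cylinder_wordPrefix] at h1 ⊢
      exact fun i hi => h1 i (by omega)
    · rw [← hsame]
      rw [mem_cylinder_wordPrefix] at h1 ⊢
      exact fun i hi => h1 i (by omega)
  have h1 : (μ (cylinder A (wordPrefix ω (k + n)))).toReal +
      (μ (cylinder A (wordPrefix υ (k + n)))).toReal ≤ (μ (cylinder A (wordPrefix ω k))).toReal := by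
    rw [← ENNReal.toReal_add (measure_ne_top _ _) (measure_ne_top _ _),
      ← measure_union hdisj (measurableSet_cylinder _)]
    exact ENNReal.toReal_mono (measure_ne_top _ _) (measure_mono hsub)
  have h2 := h υ k n hk
  rw [hsame] at h2
  calc _ ≤ (1 - δ n) * (μ (cylinder A (wordPrefix ω k))).toReal := by linarith
    _ ≤ _ := by
      gcongr
      exact le_max_right _ _

/-- A nonnegative sequence bounded by `1` and contracting along steps of length `n` has
uniformly bounded partial sums. -/
lemma sum_range_le_of_contract {s : ℕ → ℝ} {r : ℝ} {n : ℕ} (h0 : ∀ k, 0 ≤ s k)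
    (h1 : ∀ k, s k ≤ 1) (hr : r < 1) (h : ∀ k, s (k + n) ≤ r * s k) (N : ℕ) :
    ∑ k ∈ Finset.range N, s k ≤ n / (1 - r) := by
  rw [le_div_iff₀ (by linarith)]
  have e1 : ∑ k ∈ Finset.range N, s k ≤ ∑ k ∈ Finset.range (n + N), s k :=
    Finset.sum_le_sum_of_subset_of_nonneg (Finset.range_mono (by omega)) fun k _ _ => h0 k
  have e2 : ∑ k ∈ Finset.range n, s k ≤ n := by
    simpa using Finset.sum_le_card_nsmul (Finset.range n) s 1 fun k _ => h1 k
  have e3 : ∑ k ∈ Finset.range N, s (n + k) ≤ r * ∑ k ∈ Finset.range N, s k := by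
    rw [Finset.mul_sum]
    exact Finset.sum_le_sum fun k _ => by rw [add_comm]; exact h k
  rw [Finset.sum_range_add] at e1
  linarith

lemma IsGibbs.exists_sum_sqrt_le [IsProbabilityMeasure μ] (hl : 2 ≤ l) (hA : Primitive A)
    (hG : IsGibbs φ P μ) (hφ : HolderCont φ) :
    ∃ K : ℝ, 0 ≤ K ∧ ∀ (ω : SigmaA l A) (N : ℕ), ∑ k ∈ Finset.range N,
      Real.sqrt (μ (cylinder A (wordPrefix ω (k + 1)))).toReal ≤ K := by
  obtain ⟨r, n, hr0, hr1, h⟩ := hG.exists_decay hl hA hφ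
  have hr : Real.sqrt r < 1 := by rw [Real.sqrt_lt' one_pos]; simpa
  refine ⟨n / (1 - Real.sqrt r), div_nonneg (Nat.cast_nonneg _) (by linarith), fun ω N =>
    sum_range_le_of_contract (fun k => Real.sqrt_nonneg _) (fun k => ?_) hr (fun k => ?_) N⟩
  · refine Real.sqrt_le_iff.2 ⟨zero_le_one, ?_⟩
    rw [one_pow]
    exact ENNReal.toReal_le_of_le_ofReal one_pos.le (by simpa using prob_le_one)
  · rw [← Real.sqrt_mul hr0]
    refine Real.sqrt_le_sqrt ?_
    have := h ω (k + 1) (by omega)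
    rwa [show k + n + 1 = k + 1 + n by omega]

end Gibbs

/-! ### Functions of finitely many coordinates -/

section LocConst

variable {A : Matrix (Fin l) (Fin l) ℕ} {μ : Measure (SigmaA l A)} {f g : SigmaA l A → ℂ} {N : ℕ}

/-- The function `f` depends only on the first `N` coordinates. -/
def LocConst (N : ℕ) (f : SigmaA l A → ℂ) : Prop :=
  ∀ ω υ : SigmaA l A, (∀ i < N, ω.1 i = υ.1 i) → f ω = f υ

lemma LocConst.mono {M : ℕ} (hf : LocConst N f) (h : N ≤ M) : LocConst M f :=
  fun ω υ hωυ => hf ω υ fun i hi => hωυ i (by omega)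

lemma LocConst.add (hf : LocConst N f) (hg : LocConst N g) :
    LocConst N (fun ω => f ω + g ω) := fun ω υ h => by simp only [hf ω υ h, hg ω υ h]

lemma LocConst.sub (hf : LocConst N f) (hg : LocConst N g) :
    LocConst N (fun ω => f ω - g ω) := fun ω υ h => by simp only [hf ω υ h, hg ω υ h]

lemma LocConst.mul (hf : LocConst N f) (hg : LocConst N g) :
    LocConst N (fun ω => f ω * g ω) := fun ω υ h => by simp only [hf ω υ h, hg ω υ h]

lemma LocConst.const_mul (hf : LocConst N f) (c : ℂ) :
    LocConst N (fun ω => c * f ω) := fun ω υ h => by simp only [hf ω υ h]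

lemma LocConst.conj (hf : LocConst N f) :
    LocConst N (fun ω => (starRingEnd ℂ) (f ω)) := fun ω υ h => by simp only [hf ω υ h]

lemma LocConst.sum {ι : Type*} {s : Finset ι} {F : ι → SigmaA l A → ℂ}
    (hF : ∀ i ∈ s, LocConst N (F i)) : LocConst N (fun ω => ∑ i ∈ s, F i ω) :=
  fun ω υ h => Finset.sum_congr rfl fun i hi => hF i hi ω υ h

lemma LocConst.memLp [IsFiniteMeasure μ] (hf : LocConst N f) (p : ℝ≥0∞) : MemLp f p μ := by
  classical
  let R : SigmaA l A → (Fin N → Fin l) := fun ω i => ω.1 i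
  let G : (Fin N → Fin l) → ℂ := fun w => if h : ∃ ω, R ω = w then f h.choose else 0
  have hfG : f = G ∘ R := by
    funext ω
    have hex : ∃ ω', R ω' = R ω := ⟨ω, rfl⟩
    simp only [Function.comp, G, dif_pos hex]
    exact hf _ _ fun i hi => (congrFun hex.choose_spec ⟨i, hi⟩).symm
  have hR : Measurable R :=
    measurable_pi_lambda _ fun i => (measurable_pi_apply (i : ℕ)).comp measurable_subtype_coe
  have hmeas : Measurable f := hfG ▸ (measurable_of_finite G).comp hR
  refine MemLp.of_bound hmeas.aestronglyMeasurable (∑ w, ‖G w‖) (Eventually.of_forall fun ω => ?_)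
  rw [hfG]
  exact Finset.single_le_sum (f := fun w => ‖G w‖) (fun w _ => norm_nonneg _)
    (Finset.mem_univ (R ω))

lemma LocConst.integrable [IsFiniteMeasure μ] (hf : LocConst N f) : Integrable f μ :=
  memLp_one_iff_integrable.1 (hf.memLp 1)

lemma indC_of_mem {x : List (Fin l)} {ω : SigmaA l A} (h : ω ∈ cylinder A x) : indC A x ω = 1 := by
  simp [indC, h]

lemma indC_of_notMem {x : List (Fin l)} {ω : SigmaA l A} (h : ω ∉ cylinder A x) :
    indC A x ω = 0 := by
  simp [indC, h]

lemma indC_nil (ω : SigmaA l A) : indC A [] ω = 1 := indC_of_mem (by simp [cylinder])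

lemma conj_indC (x : List (Fin l)) (ω : SigmaA l A) :
    (starRingEnd ℂ) (indC A x ω) = indC A x ω := by
  by_cases h : ω ∈ cylinder A x
  · simp [indC_of_mem h]
  · simp [indC_of_notMem h]

lemma locConst_indC (x : List (Fin l)) : LocConst x.length (indC A x) := by
  intro ω υ h
  have : ω ∈ cylinder A x ↔ υ ∈ cylinder A x :=
    forall₂_congr fun i hi => by rw [h i hi]
  by_cases hω : ω ∈ cylinder A x
  · rw [indC_of_mem hω, indC_of_mem (this.1 hω)]
  · rw [indC_of_notMem hω, indC_of_notMem (fun h' => hω (this.2 h'))]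

lemma exists_locConst_of_mem_H0 (hf : f ∈ H0 A) : ∃ N, LocConst N f := by
  induction hf using Submodule.span_induction with
  | mem f hf =>
    obtain ⟨x, -, rfl⟩ := hf
    exact ⟨_, locConst_indC x⟩
  | zero => exact ⟨0, fun _ _ _ => rfl⟩
  | add f g _ _ hf hg =>
    obtain ⟨N, hN⟩ := hf
    obtain ⟨M, hM⟩ := hg
    exact ⟨max N M, (hN.mono (le_max_left _ _)).add (hM.mono (le_max_right _ _))⟩
  | smul c f _ hf =>
    obtain ⟨N, hN⟩ := hf
    exact ⟨N, hN.const_mul c⟩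

lemma integral_indC (x : List (Fin l)) : ∫ ω, indC A x ω ∂μ = ((μ (cylinder A x)).toReal : ℂ) := by
  have : indC A x = (cylinder A x).indicator (fun _ => (1 : ℂ)) := rfl
  rw [this, integral_indicator_const _ (measurableSet_cylinder x)]
  simp [Measure.real]

lemma innerMu_add [IsFiniteMeasure μ] {h : SigmaA l A → ℂ} (hh : LocConst N h)
    (hf : LocConst N f) (hg : LocConst N g) :
    innerMu A μ h (fun ω => f ω + g ω) = innerMu A μ h f + innerMu A μ h g := by
  simp only [innerMu, mul_add]
  exact integral_add (hh.conj.mul hf).integrable (hh.conj.mul hg).integrable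

lemma innerMu_sub [IsFiniteMeasure μ] {h : SigmaA l A → ℂ} (hh : LocConst N h)
    (hf : LocConst N f) (hg : LocConst N g) :
    innerMu A μ h (fun ω => f ω - g ω) = innerMu A μ h f - innerMu A μ h g := by
  simp only [innerMu, mul_sub]
  exact integral_sub (hh.conj.mul hf).integrable (hh.conj.mul hg).integrable

lemma innerMu_const_mul (h f : SigmaA l A → ℂ) (c : ℂ) :
    innerMu A μ h (fun ω => c * f ω) = c * innerMu A μ h f := by
  simp only [innerMu, mul_left_comm _ c]
  exact integral_const_mul _ _

lemma innerMu_sum [IsFiniteMeasure μ] {ι : Type*} {s : Finset ι} {F : ι → SigmaA l A → ℂ}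
    {h : SigmaA l A → ℂ} (hh : LocConst N h) (hF : ∀ i ∈ s, LocConst N (F i)) :
    innerMu A μ h (fun ω => ∑ i ∈ s, F i ω) = ∑ i ∈ s, innerMu A μ h (F i) := by
  simp only [innerMu, Finset.mul_sum]
  exact integral_finsetSum _ fun i hi => (hh.conj.mul (hF i hi)).integrable

lemma conj_innerMu (f g : SigmaA l A → ℂ) :
    (starRingEnd ℂ) (innerMu A μ f g) = innerMu A μ g f := by
  simp only [innerMu]
  rw [← integral_conj]
  simp [mul_comm]

lemma norm_innerMu_le [IsFiniteMeasure μ] (hf : LocConst N f) (hg : LocConst N g)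
    (hf1 : eLpNorm f 2 μ ≤ 1) (hg1 : eLpNorm g 2 μ ≤ 1) : ‖innerMu A μ f g‖ ≤ 1 := by
  have hc : eLpNorm (fun ω => (starRingEnd ℂ) (f ω)) 2 μ = eLpNorm f 2 μ :=
    eLpNorm_congr_norm_ae (Eventually.of_forall fun ω => by simp)
  have h1 : ‖innerMu A μ f g‖ₑ ≤ 1 := by
    calc ‖innerMu A μ f g‖ₑ ≤ ∫⁻ ω, ‖(starRingEnd ℂ) (f ω) * g ω‖ₑ ∂μ :=
          enorm_integral_le_lintegral_enorm _
      _ = eLpNorm ((fun ω => (starRingEnd ℂ) (f ω)) • g) 1 μ := by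
          rw [eLpNorm_one_eq_lintegral_enorm]
          rfl
      _ ≤ eLpNorm (fun ω => (starRingEnd ℂ) (f ω)) 2 μ * eLpNorm g 2 μ :=
          eLpNorm_smul_le_mul_eLpNorm (hg.memLp 2).1 (hf.conj.memLp 2).1
      _ ≤ 1 * 1 := by
          rw [hc]
          gcongr
      _ = 1 := one_mul 1
  rw [← toReal_enorm]
  simpa using ENNReal.toReal_mono ENNReal.one_ne_top h1

lemma eLpNorm_two_le_one_of_innerMu_self [IsFiniteMeasure μ] (hf : LocConst N f)
    (h : innerMu A μ f f = 1) : eLpNorm f 2 μ ≤ 1 := by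
  have h1 : ∫ ω, ‖f ω‖ ^ 2 ∂μ = 1 := by
    have : innerMu A μ f f = ((∫ ω, ‖f ω‖ ^ 2 ∂μ : ℝ) : ℂ) := by
      rw [← integral_complex_ofReal]
      simp only [innerMu]
      congr 1
      funext ω
      rw [Complex.conj_mul']
      push_cast
      rfl
    rw [this] at h
    exact_mod_cast h
  rw [(hf.memLp 2).eLpNorm_eq_integral_rpow_norm (by simp) (by simp)]
  simp [h1]

end LocConst

/-! ### The Haar system -/

section Haar

variable {A : Matrix (Fin l) (Fin l) ℕ} {μ : Measure (SigmaA l A)}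
  {θinv : List (Fin l) → ℕ → Fin l} {u : List (Fin l) → ℕ → ℕ → ℝ}

/-- The standing assumptions on the measure, the orderings of children and the coefficients
defining the Haar functions. -/
structure IsHaarFamily (A : Matrix (Fin l) (Fin l) ℕ) (μ : Measure (SigmaA l A))
    (θinv : List (Fin l) → ℕ → Fin l) (u : List (Fin l) → ℕ → ℕ → ℝ) : Prop where
  pos : ∀ x, Admissible A x → 0 < (μ (cylinder A x)).toReal
  bijOn : ∀ (x : List (Fin l)) (hx : Admissible A x),
    Set.BijOn (θinv x) (Set.Iio (alpha A x)) {y : Fin l | A (x.getLast hx.1) y = 1}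
  orth : ∀ x, Admissible A x → ∀ j < alpha A x, ∀ j' < alpha A x,
    ∑ m ∈ Finset.range (alpha A x), u x m j * u x m j' = if j = j' then 1 else 0
  last : ∀ x, Admissible A x → ∀ m < alpha A x,
    u x m (alpha A x - 1) =
      (Real.sqrt ((μ (cylinder A x)).toReal))⁻¹ *
        Real.sqrt ((μ (cylinder A (child θinv x m))).toReal)

lemma mem_cylinder_child {y : List (Fin l)} {m : ℕ} {ω : SigmaA l A} :
    ω ∈ cylinder A (child θinv y m) ↔ ω ∈ cylinder A y ∧ ω.1 y.length = θinv y m :=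
  mem_cylinder_append_singleton _ _ _

lemma locConst_indC_child (y : List (Fin l)) (m : ℕ) :
    LocConst (y.length + 1) (indC A (child θinv y m)) := by
  simpa [child] using locConst_indC (A := A) (child θinv y m)

lemma locConst_haarFun (y : List (Fin l)) (j : ℕ) :
    LocConst (y.length + 1) (haarFun A μ θinv u y j) :=
  LocConst.sum fun m _ => (locConst_indC_child y m).const_mul _

lemma haarFun_of_notMem {y : List (Fin l)} (j : ℕ) {ω : SigmaA l A} (hω : ω ∉ cylinder A y) :
    haarFun A μ θinv u y j ω = 0 :=
  Finset.sum_eq_zero fun m _ => by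
    rw [indC_of_notMem fun h => hω (mem_cylinder_child.1 h).1, mul_zero]

lemma conj_haarFun (y : List (Fin l)) (j : ℕ) (ω : SigmaA l A) :
    (starRingEnd ℂ) (haarFun A μ θinv u y j ω) = haarFun A μ θinv u y j ω := by
  simp only [haarFun, map_sum, map_mul, conj_indC, Complex.conj_ofReal]

namespace IsHaarFamily

lemma admissible_child (H : IsHaarFamily A μ θinv u) {y : List (Fin l)} (hy : Admissible A y)
    {m : ℕ} (hm : m < alpha A y) : Admissible A (child θinv y m) :=
  admissible_append_singleton hy ((H.bijOn y hy).mapsTo hm)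

lemma exists_child (H : IsHaarFamily A μ θinv u) {y : List (Fin l)} (hy : Admissible A y)
    {ω : SigmaA l A} (hω : ω ∈ cylinder A y) :
    ∃ m < alpha A y, θinv y m = ω.1 y.length :=
  (H.bijOn y hy).surjOn (getLast_transition hy.1 hω)

lemma sum_indC_child (H : IsHaarFamily A μ θinv u) {y : List (Fin l)} (hy : Admissible A y)
    (ω : SigmaA l A) :
    ∑ m ∈ Finset.range (alpha A y), indC A (child θinv y m) ω = indC A y ω := by
  by_cases hω : ω ∈ cylinder A y
  · obtain ⟨m, hm, hmω⟩ := H.exists_child hy hω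
    rw [indC_of_mem hω, Finset.sum_eq_single_of_mem m (Finset.mem_range.2 hm),
      indC_of_mem (mem_cylinder_child.2 ⟨hω, hmω.symm⟩)]
    intro m' hm' hne
    refine indC_of_notMem fun h => hne ?_
    exact (H.bijOn y hy).injOn (Finset.mem_range.1 hm') hm
      ((mem_cylinder_child.1 h).2.symm.trans hmω.symm)
  · rw [indC_of_notMem hω]
    exact Finset.sum_eq_zero fun m _ => indC_of_notMem fun h => hω (mem_cylinder_child.1 h).1

lemma indC_child_mul (H : IsHaarFamily A μ θinv u) {y : List (Fin l)} (hy : Admissible A y)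
    {m m' : ℕ} (hm : m < alpha A y) (hm' : m' < alpha A y) (ω : SigmaA l A) :
    indC A (child θinv y m) ω * indC A (child θinv y m') ω =
      if m = m' then indC A (child θinv y m) ω else 0 := by
  by_cases h : ω ∈ cylinder A (child θinv y m)
  · by_cases h' : ω ∈ cylinder A (child θinv y m')
    · have : m = m' := (H.bijOn y hy).injOn hm hm'
        ((mem_cylinder_child.1 h).2.symm.trans (mem_cylinder_child.1 h').2)
      simp [this, indC_of_mem h']
    · have : m ≠ m' := by
        rintro rfl
        exact h' h
      simp [this, indC_of_notMem h']
  · simp [indC_of_notMem h]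

lemma sqrt_child_eq (H : IsHaarFamily A μ θinv u) {y : List (Fin l)} (hy : Admissible A y)
    {m : ℕ} (hm : m < alpha A y) :
    Real.sqrt (μ (cylinder A (child θinv y m))).toReal =
      Real.sqrt (μ (cylinder A y)).toReal * u y m (alpha A y - 1) := by
  rw [H.last y hy m hm, mul_inv_cancel_left₀ (Real.sqrt_pos.2 (H.pos y hy)).ne']

lemma sqrt_child_pos (H : IsHaarFamily A μ θinv u) {y : List (Fin l)} (hy : Admissible A y)
    {m : ℕ} (hm : m < alpha A y) :
    0 < Real.sqrt (μ (cylinder A (child θinv y m))).toReal :=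
  Real.sqrt_pos.2 (H.pos _ (H.admissible_child hy hm))

lemma integral_haarFun (H : IsHaarFamily A μ θinv u) {y : List (Fin l)} (hy : Admissible A y)
    [IsFiniteMeasure μ] {j : ℕ} (hj : j < alpha A y - 1) :
    ∫ ω, haarFun A μ θinv u y j ω ∂μ = 0 := by
  simp only [haarFun]
  rw [integral_finsetSum _ fun m _ => ((locConst_indC_child y m).const_mul _).integrable]
  simp only [integral_const_mul, integral_indC]
  have h0 := H.orth y hy j (by omega) (alpha A y - 1) (by omega)
  rw [if_neg (by omega)] at h0
  have : ∑ m ∈ Finset.range (alpha A y),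
      (Real.sqrt (μ (cylinder A (child θinv y m))).toReal)⁻¹ * u y m j *
        (μ (cylinder A (child θinv y m))).toReal = 0 := by
    rw [← mul_zero (Real.sqrt (μ (cylinder A y)).toReal), ← h0, Finset.mul_sum]
    refine Finset.sum_congr rfl fun m hm => ?_
    have hm := Finset.mem_range.1 hm
    have hp := H.sqrt_child_pos hy hm
    rw [mul_left_comm, ← H.sqrt_child_eq hy hm]
    nth_rewrite 2 [← Real.sq_sqrt (ENNReal.toReal_nonneg (a := μ (cylinder A (child θinv y m))))]
    field_simp
  exact_mod_cast this

/-- A Haar function at `y` is orthogonal to every function constant on `[y]`. -/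
lemma innerMu_haarFun_of_const (H : IsHaarFamily A μ θinv u) {y : List (Fin l)} (hy : Admissible A y)
    [IsFiniteMeasure μ] {j : ℕ} (hj : j < alpha A y - 1)
    {g : SigmaA l A → ℂ} {c : ℂ} (hg : ∀ ω ∈ cylinder A y, g ω = c) :
    innerMu A μ (haarFun A μ θinv u y j) g = 0 := by
  have : ∀ ω, (starRingEnd ℂ) (haarFun A μ θinv u y j ω) * g ω =
      haarFun A μ θinv u y j ω * c := by
    intro ω
    rw [conj_haarFun]
    by_cases hω : ω ∈ cylinder A y
    · rw [hg ω hω]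
    · simp [haarFun_of_notMem j hω]
  simp only [innerMu, this, integral_mul_const, H.integral_haarFun hy hj, zero_mul]

lemma innerMu_haarFun_of_locConst (H : IsHaarFamily A μ θinv u) {y : List (Fin l)} (hy : Admissible A y)
    [IsFiniteMeasure μ] {j : ℕ} (hj : j < alpha A y - 1)
    {g : SigmaA l A → ℂ} {N : ℕ} (hg : LocConst N g) (hN : N ≤ y.length) :
    innerMu A μ (haarFun A μ θinv u y j) g = 0 := by
  by_cases hne : (cylinder A y).Nonempty
  · obtain ⟨υ, hυ⟩ := hne
    refine H.innerMu_haarFun_of_const hy hj (c := g υ) fun ω hω => hg ω υ fun i hi => ?_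
    rw [hω i (by omega), hυ i (by omega)]
  · exact H.innerMu_haarFun_of_const hy hj (c := 0) fun ω hω => (hne ⟨ω, hω⟩).elim

lemma innerMu_haarFun_same (H : IsHaarFamily A μ θinv u) {y : List (Fin l)} (hy : Admissible A y)
    [IsFiniteMeasure μ] {j j' : ℕ} (hj : j < alpha A y)
    (hj' : j' < alpha A y) :
    innerMu A μ (haarFun A μ θinv u y j) (haarFun A μ θinv u y j') = if j = j' then 1 else 0 := by
  have hpt : ∀ ω, (starRingEnd ℂ) (haarFun A μ θinv u y j ω) * haarFun A μ θinv u y j' ω =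
      ∑ m ∈ Finset.range (alpha A y),
        (((μ (cylinder A (child θinv y m))).toReal⁻¹ * (u y m j * u y m j') : ℝ) : ℂ) *
          indC A (child θinv y m) ω := by
    intro ω
    rw [conj_haarFun]
    simp only [haarFun]
    rw [Finset.sum_mul_sum]
    refine Finset.sum_congr rfl fun m hm => ?_
    rw [Finset.sum_eq_single_of_mem m hm, mul_mul_mul_comm,
      H.indC_child_mul hy (Finset.mem_range.1 hm) (Finset.mem_range.1 hm), if_pos rfl,
      ← Complex.ofReal_mul,
      ← Real.sq_sqrt (ENNReal.toReal_nonneg (a := μ (cylinder A (child θinv y m)))),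
      Real.sqrt_sq (Real.sqrt_nonneg _)]
    · congr 2
      ring
    · intro m' hm' hne
      rw [mul_mul_mul_comm, H.indC_child_mul hy (Finset.mem_range.1 hm) (Finset.mem_range.1 hm'),
        if_neg hne.symm, mul_zero]
  simp only [innerMu, hpt]
  rw [integral_finsetSum _ fun m _ => ((locConst_indC_child y m).const_mul _).integrable]
  simp only [integral_const_mul, integral_indC]
  have h0 := H.orth y hy j hj j' hj'
  have : ∑ m ∈ Finset.range (alpha A y),
      (μ (cylinder A (child θinv y m))).toReal⁻¹ * (u y m j * u y m j') *
        (μ (cylinder A (child θinv y m))).toReal = if j = j' then 1 else 0 := by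
    rw [← h0]
    refine Finset.sum_congr rfl fun m hm => ?_
    have := H.pos _ (H.admissible_child hy (Finset.mem_range.1 hm))
    field_simp
  split_ifs at this ⊢ <;> exact_mod_cast this

lemma innerMu_haarFun_ne (H : IsHaarFamily A μ θinv u) {y : List (Fin l)} (hy : Admissible A y)
    [IsFiniteMeasure μ] {z : List (Fin l)} (hz : Admissible A z) (hne : y ≠ z)
    {j j' : ℕ} (hj : j < alpha A y - 1) (hj' : j' < alpha A z - 1) :
    innerMu A μ (haarFun A μ θinv u y j) (haarFun A μ θinv u z j') = 0 := by
  rcases lt_trichotomy z.length y.length with h | h | h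
  · exact H.innerMu_haarFun_of_locConst hy hj (locConst_haarFun z j') h
  · refine H.innerMu_haarFun_of_const hy hj (c := 0) fun ω hω => haarFun_of_notMem _ fun hω' => ?_
    exact hne (List.ext_getElem h.symm fun i h1 h2 => by rw [← hω i h1, ← hω' i h2])
  · rw [← conj_innerMu, H.innerMu_haarFun_of_locConst hz hj' (locConst_haarFun y j) h, map_zero]

lemma abs_coeff_le_one (H : IsHaarFamily A μ θinv u) {y : List (Fin l)} (hy : Admissible A y)
    {m j : ℕ} (hm : m < alpha A y) (hj : j < alpha A y) : |u y m j| ≤ 1 := by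
  have h := H.orth y hy j hj j hj
  rw [if_pos rfl] at h
  have h1 := Finset.single_le_sum (f := fun m => u y m j * u y m j)
    (fun m _ => mul_self_nonneg _) (Finset.mem_range.2 hm)
  rw [← sq_le_one_iff_abs_le_one, sq]
  exact h1.trans h.le

/-- The rows of the coefficient matrix are orthonormal as well. -/
lemma orth_rows (H : IsHaarFamily A μ θinv u) {y : List (Fin l)} (hy : Admissible A y)
    {m m' : ℕ} (hm : m < alpha A y) (hm' : m' < alpha A y) :
    ∑ j ∈ Finset.range (alpha A y), u y m j * u y m' j = if m = m' then 1 else 0 := by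
  let U : Matrix (Fin (alpha A y)) (Fin (alpha A y)) ℝ := Matrix.of fun m j => u y m j
  have h1 : U.transpose * U = 1 := by
    ext j j'
    rw [Matrix.mul_apply, Matrix.one_apply]
    simp only [U, Matrix.transpose_apply, Matrix.of_apply]
    rw [← Finset.sum_range fun m => u y m j * u y m j', H.orth y hy j j.2 j' j'.2]
    simp [Fin.ext_iff]
  have h2 := Matrix.ext_iff.2 (mul_eq_one_comm.1 h1) ⟨m, hm⟩ ⟨m', hm'⟩
  rw [Matrix.mul_apply, Matrix.one_apply] at h2
  simp only [U, Matrix.transpose_apply, Matrix.of_apply] at h2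
  rw [← Finset.sum_range fun j => u y m j * u y m' j] at h2
  simpa [Fin.ext_iff] using h2

end IsHaarFamily

end Haar

/-! ### The Dirac operator -/

section Dirac

variable {A : Matrix (Fin l) (Fin l) ℕ} {μ : Measure (SigmaA l A)}
  {θinv : List (Fin l) → ℕ → Fin l} {u : List (Fin l) → ℕ → ℕ → ℝ}

lemma finite_admissible_length_lt (A : Matrix (Fin l) (Fin l) ℕ) (N : ℕ) :
    {y : List (Fin l) | Admissible A y ∧ y.length < N}.Finite :=
  (List.finite_length_lt (Fin l) N).subset fun _ h => h.2

/-- The finite set of admissible words of length less than `N`. -/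
noncomputable def admWords (A : Matrix (Fin l) (Fin l) ℕ) (N : ℕ) : Finset (List (Fin l)) :=
  (finite_admissible_length_lt A N).toFinset

lemma mem_admWords {N : ℕ} {y : List (Fin l)} :
    y ∈ admWords A N ↔ Admissible A y ∧ y.length < N := by
  simp [admWords]

lemma indC_singleton_mul (b b' : Fin l) (ω : SigmaA l A) :
    indC A [b] ω * indC A [b'] ω = if b = b' then indC A [b] ω else 0 := by
  have hmem : ∀ c : Fin l, ω ∈ cylinder A [c] ↔ ω.1 0 = c := fun c => by simp [cylinder]
  by_cases h : ω.1 0 = b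
  · by_cases h' : ω.1 0 = b'
    · simp [indC_of_mem ((hmem b').2 h'), h.symm.trans h']
    · simp [indC_of_notMem (mt (hmem b').1 h'), show b ≠ b' from fun e => h' (h.trans e)]
  · simp [indC_of_notMem (mt (hmem b).1 h)]

lemma sum_indC_singleton (ω : SigmaA l A) : ∑ b, indC A [b] ω = 1 := by
  rw [Finset.sum_eq_single_of_mem (ω.1 0) (Finset.mem_univ _)]
  · exact indC_of_mem (by simp [cylinder])
  · intro b _ hb
    exact indC_of_notMem (by simpa [cylinder] using hb.symm)

lemma innerMu_indC_singleton (b b' : Fin l) :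
    innerMu A μ (indC A [b]) (indC A [b']) =
      if b = b' then ((μ (cylinder A [b])).toReal : ℂ) else 0 := by
  simp only [innerMu, conj_indC, indC_singleton_mul]
  split_ifs with h
  · exact integral_indC _
  · simp

lemma innerMu_indC_nil (g : SigmaA l A → ℂ) : innerMu A μ (indC A []) g = ∫ ω, g ω ∂μ := by
  simp [innerMu, indC_nil]

lemma innerMu_indC_nil_right (x : List (Fin l)) :
    innerMu A μ (indC A x) (indC A []) = ((μ (cylinder A x)).toReal : ℂ) := by
  simp [innerMu, conj_indC, indC_nil, integral_indC]

lemma locConst_indC_nil (N : ℕ) : LocConst N (indC A []) :=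
  (locConst_indC []).mono (Nat.zero_le _)

lemma locConst_indC_singleton (b : Fin l) {N : ℕ} (hN : 0 < N) : LocConst N (indC A [b]) :=
  (locConst_indC [b]).mono hN

namespace IsHaarFamily

variable [IsProbabilityMeasure μ]

lemma Dop_eq_finite_sum (H : IsHaarFamily A μ θinv u)
    {a : SigmaA l A → ℂ} {N : ℕ} (ha : LocConst N a) :
    Dop A μ θinv u a = fun ω =>
      (∑ b : Fin l, (((μ (cylinder A [b])).toReal : ℂ))⁻¹ * innerMu A μ (indC A [b]) a *
          indC A [b] ω)
        - innerMu A μ (indC A []) a * indC A [] ω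
        + ∑ y ∈ admWords A N, ((((alpha A y : ℝ) - 1) / (μ (cylinder A y)).toReal : ℝ) : ℂ) *
            ∑ j ∈ Finset.range (alpha A y - 1),
              innerMu A μ (haarFun A μ θinv u y j) a * haarFun A μ θinv u y j ω := by
  funext ω
  simp only [Dop]
  rw [tsum_eq_sum (s := admWords A N)]
  · congr 1
    refine Finset.sum_congr rfl fun y hy => ?_
    rw [Set.indicator_of_mem]
    exact (mem_admWords.1 hy).1
  · intro y hy
    by_cases hadm : Admissible A y
    · rw [Set.indicator_of_mem (show y ∈ {y : List (Fin l) | Admissible A y} from hadm)]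
      have hlen : N ≤ y.length := by
        by_contra hlt
        exact hy (mem_admWords.2 ⟨hadm, by omega⟩)
      rw [Finset.sum_eq_zero, mul_zero]
      intro j hj
      rw [H.innerMu_haarFun_of_locConst hadm (Finset.mem_range.1 hj) ha hlen, zero_mul]
    · exact Set.indicator_of_notMem (s := {y : List (Fin l) | Admissible A y}) hadm _

lemma locConst_Dop (H : IsHaarFamily A μ θinv u)
    {a : SigmaA l A → ℂ} {N : ℕ} (ha : LocConst N a) (hN : 0 < N) :
    LocConst N (Dop A μ θinv u a) := by
  rw [H.Dop_eq_finite_sum ha]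
  refine ((LocConst.sum fun b _ => (locConst_indC_singleton b hN).const_mul _).sub
    ((locConst_indC_nil N).const_mul _)).add (LocConst.sum fun y hy => LocConst.const_mul
      (LocConst.sum fun j _ => LocConst.const_mul ?_ _) _)
  exact (locConst_haarFun y j).mono (mem_admWords.1 hy).2

lemma innerMu_Dop (H : IsHaarFamily A μ θinv u)
    {a h : SigmaA l A → ℂ} {N : ℕ} (ha : LocConst N a) (hh : LocConst N h)
    (hN : 0 < N) :
    innerMu A μ h (Dop A μ θinv u a) =
      (∑ b : Fin l, (((μ (cylinder A [b])).toReal : ℂ))⁻¹ * innerMu A μ (indC A [b]) a *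
          innerMu A μ h (indC A [b]))
        - innerMu A μ (indC A []) a * innerMu A μ h (indC A [])
        + ∑ y ∈ admWords A N, ((((alpha A y : ℝ) - 1) / (μ (cylinder A y)).toReal : ℝ) : ℂ) *
            ∑ j ∈ Finset.range (alpha A y - 1),
              innerMu A μ (haarFun A μ θinv u y j) a *
                innerMu A μ h (haarFun A μ θinv u y j) := by
  have h1 : LocConst N (fun ω => ∑ b : Fin l, (((μ (cylinder A [b])).toReal : ℂ))⁻¹ *
      innerMu A μ (indC A [b]) a * indC A [b] ω) :=
    LocConst.sum fun b _ => (locConst_indC_singleton b hN).const_mul _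
  have h2 : LocConst N (fun ω => innerMu A μ (indC A []) a * indC A [] ω) :=
    (locConst_indC_nil N).const_mul _
  have h3 : ∀ y ∈ admWords A N, ∀ j : ℕ, LocConst N (fun ω =>
      innerMu A μ (haarFun A μ θinv u y j) a * haarFun A μ θinv u y j ω) := fun y hy j =>
    LocConst.const_mul ((locConst_haarFun y j).mono (mem_admWords.1 hy).2) _
  have h4 : ∀ y ∈ admWords A N, LocConst N (fun ω =>
      ((((alpha A y : ℝ) - 1) / (μ (cylinder A y)).toReal : ℝ) : ℂ) *
        ∑ j ∈ Finset.range (alpha A y - 1),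
          innerMu A μ (haarFun A μ θinv u y j) a * haarFun A μ θinv u y j ω) := fun y hy =>
    LocConst.const_mul (LocConst.sum fun j _ => h3 y hy j) _
  rw [H.Dop_eq_finite_sum ha, innerMu_add hh (h1.sub h2) (LocConst.sum h4), innerMu_sub hh h1 h2,
    innerMu_sum hh fun b _ => (locConst_indC_singleton b hN).const_mul _, innerMu_sum hh h4]
  simp only [innerMu_const_mul]
  congr 1
  refine Finset.sum_congr rfl fun y hy => ?_
  rw [innerMu_sum hh fun j _ => h3 y hy j]
  simp only [innerMu_const_mul]

lemma Dop_one (H : IsHaarFamily A μ θinv u) : Dop A μ θinv u (indC A []) = 0 := by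
  rw [H.Dop_eq_finite_sum (locConst_indC [])]
  funext ω
  have h0 : admWords A 0 = ∅ := by
    ext y
    simp [mem_admWords]
  have h2 : (μ (cylinder A [])).toReal = 1 := by simp [cylinder]
  have h1 : ∀ b : Fin l, (((μ (cylinder A [b])).toReal : ℂ))⁻¹ *
      ((μ (cylinder A [b])).toReal : ℂ) = 1 := fun b =>
    inv_mul_cancel₀ (by exact_mod_cast (H.pos _ (admissible_singleton b)).ne')
  simp [h0, h2, innerMu_indC_nil_right, h1, sum_indC_singleton, indC_nil]

lemma innerMu_haarFun_Dop (H : IsHaarFamily A μ θinv u)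
    {a : SigmaA l A → ℂ} {N : ℕ} (ha : LocConst N a) {y : List (Fin l)}
    (hy : Admissible A y) {j : ℕ} (hj : j < alpha A y - 1) :
    innerMu A μ (haarFun A μ θinv u y j) (Dop A μ θinv u a) =
      ((((alpha A y : ℝ) - 1) / (μ (cylinder A y)).toReal : ℝ) : ℂ) *
        innerMu A μ (haarFun A μ θinv u y j) a := by
  have h0 : 0 < y.length := List.length_pos_iff.2 hy.1
  rw [H.innerMu_Dop (ha.mono (le_max_left N (y.length + 1)))
    ((locConst_haarFun y j).mono (le_max_right N (y.length + 1))) (by omega)]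
  have h1 : ∀ b : Fin l, innerMu A μ (haarFun A μ θinv u y j) (indC A [b]) = 0 := fun b =>
    H.innerMu_haarFun_of_locConst hy hj (locConst_indC [b]) h0
  have h2 : innerMu A μ (haarFun A μ θinv u y j) (indC A []) = 0 :=
    H.innerMu_haarFun_of_locConst hy hj (locConst_indC []) (Nat.zero_le _)
  simp only [h1, h2, mul_zero, Finset.sum_const_zero, sub_zero, zero_add]
  rw [Finset.sum_eq_single_of_mem y (mem_admWords.2 ⟨hy, by omega⟩)]
  · rw [Finset.sum_eq_single_of_mem j (Finset.mem_range.2 hj),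
      H.innerMu_haarFun_same hy (by omega) (by omega), if_pos rfl, mul_one]
    intro j' hj' hne
    rw [H.innerMu_haarFun_same hy (by omega) (by have := Finset.mem_range.1 hj'; omega),
      if_neg hne.symm, mul_zero]
  · intro z hz hne
    rw [Finset.sum_eq_zero, mul_zero]
    intro j' hj'
    rw [H.innerMu_haarFun_ne hy (mem_admWords.1 hz).1 hne.symm hj (Finset.mem_range.1 hj'),
      mul_zero]

lemma innerMu_indC_singleton_Dop (H : IsHaarFamily A μ θinv u)
    {a : SigmaA l A → ℂ} {N : ℕ} (ha : LocConst N a) (b : Fin l) :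
    innerMu A μ (indC A [b]) (Dop A μ θinv u a) =
      innerMu A μ (indC A [b]) a - (∫ ω, a ω ∂μ) * ((μ (cylinder A [b])).toReal : ℂ) := by
  have hb : ((μ (cylinder A [b])).toReal : ℂ) ≠ 0 := by
    exact_mod_cast (H.pos _ (admissible_singleton b)).ne'
  rw [H.innerMu_Dop (ha.mono (Nat.le_succ N)) (locConst_indC_singleton b (Nat.succ_pos N))
    (Nat.succ_pos N)]
  rw [Finset.sum_eq_zero (s := admWords A (N + 1)), add_zero, innerMu_indC_nil,
    innerMu_indC_nil_right]
  · simp only [innerMu_indC_singleton, mul_ite, mul_zero, Finset.sum_ite_eq, Finset.mem_univ,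
      if_true]
    congr 1
    field_simp
  · intro y hy
    have hadm := (mem_admWords.1 hy).1
    rw [Finset.sum_eq_zero, mul_zero]
    intro j hj
    rw [← conj_innerMu (haarFun A μ θinv u y j) (indC A [b]), H.innerMu_haarFun_of_locConst hadm
      (Finset.mem_range.1 hj) (locConst_indC [b]) (List.length_pos_iff.2 hadm.1)]
    simp

/-- The Haar coefficients of a function with `‖D a‖₂ ≤ 1`. -/
lemma norm_innerMu_haarFun_le (H : IsHaarFamily A μ θinv u)
    {a : SigmaA l A → ℂ} {N : ℕ} (ha : LocConst N a)
    (hD : eLpNorm (Dop A μ θinv u a) 2 μ ≤ 1) {y : List (Fin l)} (hy : Admissible A y) {j : ℕ}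
    (hj : j < alpha A y - 1) :
    ‖innerMu A μ (haarFun A μ θinv u y j) a‖ ≤ (μ (cylinder A y)).toReal := by
  have he := locConst_haarFun (A := A) (μ := μ) (θinv := θinv) (u := u) y j
  have h1 : eLpNorm (haarFun A μ θinv u y j) 2 μ ≤ 1 :=
    eLpNorm_two_le_one_of_innerMu_self he
      (by rw [H.innerMu_haarFun_same hy (by omega) (by omega), if_pos rfl])
  have h2 := norm_innerMu_le (he.mono (le_max_right N (y.length + 1)))
    (H.locConst_Dop (ha.mono (le_max_left N (y.length + 1))) (by omega)) h1 hD
  have hα : (1 : ℝ) ≤ (alpha A y : ℝ) - 1 := by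
    have : (2 : ℝ) ≤ alpha A y := by exact_mod_cast (by omega : 2 ≤ alpha A y)
    linarith
  have hpos := H.pos y hy
  rw [H.innerMu_haarFun_Dop ha hy hj, norm_mul, Complex.norm_real, Real.norm_of_nonneg
    (div_nonneg (by linarith) hpos.le), div_mul_eq_mul_div, div_le_one hpos] at h2
  nlinarith [norm_nonneg (innerMu A μ (haarFun A μ θinv u y j) a)]

lemma norm_first_average_sub_integral_le (H : IsHaarFamily A μ θinv u) {a : SigmaA l A → ℂ} {N : ℕ}
    (ha : LocConst N a) (hD : eLpNorm (Dop A μ θinv u a) 2 μ ≤ 1) (b : Fin l) :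
    ‖innerMu A μ (indC A [b]) a / ((μ (cylinder A [b])).toReal : ℂ) - ∫ ω, a ω ∂μ‖ ≤
      (μ (cylinder A [b])).toReal⁻¹ := by
  have hpos := H.pos _ (admissible_singleton b)
  have hne : ((μ (cylinder A [b])).toReal : ℂ) ≠ 0 := by exact_mod_cast hpos.ne'
  have h1 : eLpNorm (indC A [b]) 2 μ ≤ 1 := by
    refine (eLpNorm_le_of_ae_bound (C := 1) (Eventually.of_forall fun ω => ?_)).trans_eq
      (by rw [measure_univ]; simp)
    by_cases h : ω ∈ cylinder A [b]
    · simp [indC_of_mem h]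
    · simp [indC_of_notMem h]
  have h2 := norm_innerMu_le (locConst_indC_singleton b (Nat.succ_pos N))
    (H.locConst_Dop (ha.mono (Nat.le_succ N)) (Nat.succ_pos N)) h1 hD
  rw [H.innerMu_indC_singleton_Dop ha b] at h2
  have e : innerMu A μ (indC A [b]) a / ((μ (cylinder A [b])).toReal : ℂ) - ∫ ω, a ω ∂μ =
      (innerMu A μ (indC A [b]) a - (∫ ω, a ω ∂μ) * ((μ (cylinder A [b])).toReal : ℂ)) /
        ((μ (cylinder A [b])).toReal : ℂ) := by
    field_simp
  rw [e, norm_div, Complex.norm_real, Real.norm_of_nonneg hpos.le, inv_eq_one_div]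
  gcongr

end IsHaarFamily

end Dirac

/-! ### Averages over nested cylinders -/

section Averages

variable {A : Matrix (Fin l) (Fin l) ℕ} {μ : Measure (SigmaA l A)}
  {θinv : List (Fin l) → ℕ → Fin l} {u : List (Fin l) → ℕ → ℕ → ℝ}

/-- The average of `a` over the cylinder `[x]`. -/
noncomputable def average (A : Matrix (Fin l) (Fin l) ℕ) (μ : Measure (SigmaA l A))
    (a : SigmaA l A → ℂ) (x : List (Fin l)) : ℂ :=
  innerMu A μ (indC A x) a / ((μ (cylinder A x)).toReal : ℂ)

lemma innerMu_haarFun_eq_sum [IsFiniteMeasure μ] {a : SigmaA l A → ℂ} {N : ℕ} (ha : LocConst N a)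
    (y : List (Fin l)) (j : ℕ) :
    innerMu A μ (haarFun A μ θinv u y j) a = ∑ m ∈ Finset.range (alpha A y),
      (((Real.sqrt (μ (cylinder A (child θinv y m))).toReal)⁻¹ * u y m j : ℝ) : ℂ) *
        innerMu A μ (indC A (child θinv y m)) a := by
  simp only [innerMu, conj_haarFun, conj_indC]
  simp only [haarFun, Finset.sum_mul, mul_assoc]
  rw [integral_finsetSum]
  · simp only [integral_const_mul]
  · intro m _
    exact (((((locConst_indC_child y m).mono (le_max_left _ N)).mul
      (ha.mono (le_max_right _ _)))).const_mul _).integrable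

namespace IsHaarFamily

lemma average_wordPrefix (H : IsHaarFamily A μ θinv u)
    {a : SigmaA l A → ℂ} {N : ℕ} (ha : LocConst N a) (hN : 0 < N)
    (ω : SigmaA l A) : average A μ a (wordPrefix ω N) = a ω := by
  have hne : ((μ (cylinder A (wordPrefix ω N))).toReal : ℂ) ≠ 0 := by
    exact_mod_cast (H.pos _ (admissible_wordPrefix ω hN)).ne'
  have h : ∀ υ, (starRingEnd ℂ) (indC A (wordPrefix ω N) υ) * a υ =
      indC A (wordPrefix ω N) υ * a ω := by
    intro υ
    rw [conj_indC]
    by_cases hυ : υ ∈ cylinder A (wordPrefix ω N)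
    · rw [ha υ ω ((mem_cylinder_wordPrefix ω υ N).1 hυ)]
    · simp [indC_of_notMem hυ]
  simp only [average, innerMu, h, integral_mul_const, integral_indC]
  field_simp

variable [IsProbabilityMeasure μ]

lemma innerMu_indC_eq_sum_child (H : IsHaarFamily A μ θinv u) {y : List (Fin l)} (hy : Admissible A y)
    {a : SigmaA l A → ℂ} {N : ℕ} (ha : LocConst N a) :
    innerMu A μ (indC A y) a = ∑ m ∈ Finset.range (alpha A y),
      innerMu A μ (indC A (child θinv y m)) a := by
  simp only [innerMu, conj_indC]
  rw [← integral_finsetSum]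
  · simp only [← Finset.sum_mul, H.sum_indC_child hy]
  · intro m _
    exact (((locConst_indC_child y m).mono (le_max_left _ N)).mul
      (ha.mono (le_max_right _ _))).integrable

/-- Difference of averages over a cylinder and one of its children in terms of Haar
coefficients. -/
lemma average_child_sub (H : IsHaarFamily A μ θinv u) {y : List (Fin l)} (hy : Admissible A y)
    {a : SigmaA l A → ℂ} {N : ℕ} (ha : LocConst N a) {m : ℕ}
    (hm : m < alpha A y) :
    average A μ a (child θinv y m) - average A μ a y =
      (((Real.sqrt (μ (cylinder A (child θinv y m))).toReal)⁻¹ : ℝ) : ℂ) *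
        ∑ j ∈ Finset.range (alpha A y - 1),
          (u y m j : ℂ) * innerMu A μ (haarFun A μ θinv u y j) a := by
  set I : ℕ → ℂ := fun m => innerMu A μ (indC A (child θinv y m)) a
  set s : ℕ → ℝ := fun m => Real.sqrt (μ (cylinder A (child θinv y m))).toReal
  set S : ℝ := Real.sqrt (μ (cylinder A y)).toReal
  have hSpos : 0 < S := Real.sqrt_pos.2 (H.pos y hy)
  have hSC : (S : ℂ) ≠ 0 := by exact_mod_cast hSpos.ne'
  have hsC : ∀ m < alpha A y, (s m : ℂ) ≠ 0 := fun m hm => by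
    exact_mod_cast (H.sqrt_child_pos hy hm).ne'
  have hrow : ∀ m' < alpha A y, ∑ j ∈ Finset.range (alpha A y - 1), u y m j * u y m' j =
      (if m = m' then 1 else 0) - (S⁻¹ * s m) * (S⁻¹ * s m') := by
    intro m' hm'
    have h := H.orth_rows hy hm hm'
    rw [← Nat.sub_add_cancel (show 1 ≤ alpha A y by omega), Finset.sum_range_succ,
      H.last y hy m hm, H.last y hy m' hm'] at h
    exact eq_sub_of_add_eq h
  have hsum : ∑ j ∈ Finset.range (alpha A y - 1),
      (u y m j : ℂ) * innerMu A μ (haarFun A μ θinv u y j) a =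
        (s m : ℂ)⁻¹ * I m - (S : ℂ)⁻¹ ^ 2 * s m * ∑ m' ∈ Finset.range (alpha A y), I m' := by
    calc ∑ j ∈ Finset.range (alpha A y - 1),
          (u y m j : ℂ) * innerMu A μ (haarFun A μ θinv u y j) a
        = ∑ m' ∈ Finset.range (alpha A y), (s m' : ℂ)⁻¹ * I m' *
            ((∑ j ∈ Finset.range (alpha A y - 1), u y m j * u y m' j : ℝ) : ℂ) := by
          simp only [innerMu_haarFun_eq_sum ha, Finset.mul_sum, Complex.ofReal_sum]
          rw [Finset.sum_comm]
          refine Finset.sum_congr rfl fun m' _ => Finset.sum_congr rfl fun j _ => ?_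
          push_cast
          ring
      _ = ∑ m' ∈ Finset.range (alpha A y), ((if m = m' then (s m' : ℂ)⁻¹ * I m' else 0) -
            (S : ℂ)⁻¹ ^ 2 * s m * I m') := by
          refine Finset.sum_congr rfl fun m' hm' => ?_
          have hne := hsC m' (Finset.mem_range.1 hm')
          rw [hrow m' (Finset.mem_range.1 hm')]
          split_ifs <;> push_cast <;> field_simp
          ring
      _ = _ := by
          rw [Finset.sum_sub_distrib, Finset.sum_ite_eq, if_pos (Finset.mem_range.2 hm),
            ← Finset.mul_sum]
  have hμm : ((μ (cylinder A (child θinv y m))).toReal : ℂ) = (s m : ℂ) ^ 2 := by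
    rw [← Complex.ofReal_pow, Real.sq_sqrt ENNReal.toReal_nonneg]
  have hμy : ((μ (cylinder A y)).toReal : ℂ) = (S : ℂ) ^ 2 := by
    rw [← Complex.ofReal_pow, Real.sq_sqrt ENNReal.toReal_nonneg]
  have hne := hsC m hm
  rw [hsum, average, average, H.innerMu_indC_eq_sum_child hy ha, hμm, hμy, Complex.ofReal_inv]
  change I m / _ - (∑ m' ∈ Finset.range (alpha A y), I m') / _ = (s m : ℂ)⁻¹ * _
  field_simp

lemma norm_average_child_sub_le (H : IsHaarFamily A μ θinv u) {y : List (Fin l)} (hy : Admissible A y)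
    (hA : Primitive A) {a : SigmaA l A → ℂ} {N : ℕ}
    (ha : LocConst N a) (hD : eLpNorm (Dop A μ θinv u a) 2 μ ≤ 1) {m : ℕ}
    (hm : m < alpha A y) :
    ‖average A μ a (child θinv y m) - average A μ a y‖ ≤
      (Real.sqrt (μ (cylinder A (child θinv y m))).toReal)⁻¹ *
        (l * (μ (cylinder A y)).toReal) := by
  rw [H.average_child_sub hy ha hm, norm_mul, Complex.norm_real,
    Real.norm_of_nonneg (inv_nonneg.2 (Real.sqrt_nonneg _))]
  gcongr
  calc _ ≤ ∑ _j ∈ Finset.range (alpha A y - 1), (μ (cylinder A y)).toReal := by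
        refine norm_sum_le_of_le _ fun j hj => ?_
        have hj := Finset.mem_range.1 hj
        rw [norm_mul, Complex.norm_real, ← one_mul (μ (cylinder A y)).toReal]
        exact mul_le_mul (H.abs_coeff_le_one hy hm (by omega))
          (H.norm_innerMu_haarFun_le ha hD hy hj) (norm_nonneg _) zero_le_one
    _ = ((alpha A y - 1 : ℕ) : ℝ) * (μ (cylinder A y)).toReal := by simp
    _ ≤ _ := by
        gcongr
        exact (Nat.sub_le _ _).trans (alpha_le hA y)

end IsHaarFamily

end Averages

/-- There is a constant `K > 0` such that every `a ∈ H₀` with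
`‖[D, π(a)]‖ ≤ 1` on `H₀` satisfies `‖a − (∫ a dμ)·1‖_∞ ≤ K`. -/
theorem lipschitz_ball_bounded
    (hl : 2 ≤ l) (A : Matrix (Fin l) (Fin l) ℕ) (hA : Primitive A)
    (φ : SigmaA l A → ℝ) (hφ : HolderCont φ) (P : ℝ)
    (μ : Measure (SigmaA l A)) [IsProbabilityMeasure μ] (hGibbs : IsGibbs φ P μ)
    (θinv : List (Fin l) → ℕ → Fin l)
    (hθ : ∀ (x : List (Fin l)) (hx : Admissible A x),
      Set.BijOn (θinv x) (Set.Iio (alpha A x)) {y : Fin l | A (x.getLast hx.1) y = 1})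
    (u : List (Fin l) → ℕ → ℕ → ℝ)
    (hu_orth : ∀ x, Admissible A x → ∀ j < alpha A x, ∀ j' < alpha A x,
      ∑ m ∈ Finset.range (alpha A x), u x m j * u x m j' = if j = j' then 1 else 0)
    (hu_last : ∀ x, Admissible A x → ∀ m < alpha A x,
      u x m (alpha A x - 1) =
        (Real.sqrt ((μ (cylinder A x)).toReal))⁻¹ *
          Real.sqrt ((μ (cylinder A (child θinv x m))).toReal)) :
    ∃ K : ℝ, 0 < K ∧ ∀ a ∈ H0 A,
      (∀ h ∈ H0 A,
      eLpNorm (fun ω => Dop A μ θinv u (fun ω' => a ω' * h ω') ω - a ω * Dop A μ θinv u h ω) 2 μ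
        ≤ eLpNorm h 2 μ) →
      ∀ ω : SigmaA l A, ‖a ω - ∫ ω', a ω' ∂μ‖ ≤ K := by
  have H : IsHaarFamily A μ θinv u := ⟨fun x hx => hGibbs.cylinder_pos hA hx, hθ, hu_orth, hu_last⟩
  obtain ⟨δ, hδ, hratio⟩ := hGibbs.exists_ratio hφ
  obtain ⟨K, hK0, hK⟩ := hGibbs.exists_sum_sqrt_le hl hA hφ
  have hC : 0 < Real.sqrt (δ 1) := Real.sqrt_pos.2 (hδ 1)
  refine ⟨(Real.sqrt (δ 1))⁻¹ * l * K + ∑ b : Fin l, (μ (cylinder A [b])).toReal⁻¹ + 1,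
    by positivity, fun a ha hcomm ω => ?_⟩
  obtain ⟨N, hN⟩ := exists_locConst_of_mem_H0 ha
  have hD : eLpNorm (Dop A μ θinv u a) 2 μ ≤ 1 := by
    have h1 := hcomm (indC A []) (Submodule.subset_span ⟨[], Or.inl rfl, rfl⟩)
    have h2 : indC A ([] : List (Fin l)) = fun _ => (1 : ℂ) := funext indC_nil
    rw [H.Dop_one, h2] at h1
    have h3 : eLpNorm (fun _ : SigmaA l A => (1 : ℂ)) 2 μ ≤ 1 :=
      (eLpNorm_le_of_ae_bound (C := 1) (Eventually.of_forall fun _ => by simp)).trans_eq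
        (by rw [measure_univ]; simp)
    simpa using h1.trans h3
  have hstep : ∀ k, ‖average A μ a (wordPrefix ω (k + 1 + 1)) -
      average A μ a (wordPrefix ω (k + 1))‖ ≤
        (Real.sqrt (δ 1))⁻¹ * l * Real.sqrt (μ (cylinder A (wordPrefix ω (k + 1)))).toReal := by
    intro k
    have hadm := admissible_wordPrefix ω (Nat.succ_pos k)
    obtain ⟨m, hm, hmω⟩ := H.exists_child hadm (self_mem_cylinder_wordPrefix ω (k + 1))
    have hchild : child θinv (wordPrefix ω (k + 1)) m = wordPrefix ω (k + 1 + 1) := by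
      rw [child, hmω, length_wordPrefix, ← wordPrefix_succ]
    have h1 := H.norm_average_child_sub_le hadm hA hN hD hm
    have hr := Real.sqrt_le_sqrt (hratio ω (k + 1) 1 (Nat.succ_pos k))
    rw [Real.sqrt_mul (hδ 1).le] at hr
    rw [hchild] at h1
    have hpos := Real.sqrt_pos.2 (H.pos _ hadm)
    refine h1.trans ?_
    calc _ ≤ (Real.sqrt (δ 1) * Real.sqrt (μ (cylinder A (wordPrefix ω (k + 1)))).toReal)⁻¹ *
          (l * (μ (cylinder A (wordPrefix ω (k + 1)))).toReal) := by gcongr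
      _ = _ := by
        nth_rewrite 2 [← Real.sq_sqrt
          (ENNReal.toReal_nonneg (a := μ (cylinder A (wordPrefix ω (k + 1)))))]
        field_simp
  have htel : a ω - ∫ ω', a ω' ∂μ =
      ∑ k ∈ Finset.range N, (average A μ a (wordPrefix ω (k + 1 + 1)) -
        average A μ a (wordPrefix ω (k + 1))) +
      (average A μ a [ω.1 0] - ∫ ω', a ω' ∂μ) := by
    rw [Finset.sum_range_sub (fun k => average A μ a (wordPrefix ω (k + 1))),
      H.average_wordPrefix (hN.mono (Nat.le_succ N)) (Nat.succ_pos N)]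
    simp [wordPrefix]
  have hfirst : ‖average A μ a [ω.1 0] - ∫ ω', a ω' ∂μ‖ ≤
      ∑ b : Fin l, (μ (cylinder A [b])).toReal⁻¹ :=
    (H.norm_first_average_sub_integral_le hN hD (ω.1 0)).trans
      (Finset.single_le_sum (f := fun b : Fin l => (μ (cylinder A [b])).toReal⁻¹)
        (fun b _ => by positivity) (Finset.mem_univ _))
  have hsum : ‖∑ k ∈ Finset.range N, (average A μ a (wordPrefix ω (k + 1 + 1)) -
      average A μ a (wordPrefix ω (k + 1)))‖ ≤ (Real.sqrt (δ 1))⁻¹ * l * K := by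
    refine (norm_sum_le_of_le _ fun k _ => hstep k).trans ?_
    rw [← Finset.mul_sum]
    gcongr
    exact hK ω N
  rw [htel]
  linarith [norm_add_le (∑ k ∈ Finset.range N, (average A μ a (wordPrefix ω (k + 1 + 1)) -
    average A μ a (wordPrefix ω (k + 1)))) (average A μ a [ω.1 0] - ∫ ω', a ω' ∂μ)]

end SFT
end

section
/- Let φ : Σ_A → ℝ be d-Hölder continuous. Then there exist a Borel probability measure μ on Σ_A, a real number P, and a constant c > 1 such that c^{−1} ≤ μ([(ω_1,…,ω_k)]) / exp(S_kφ(ω) − kP) ≤ c for all ω ∈ Σ_A and k ∈ ℕ; moreover μ can be chosen σ-invariant, i.e. there exists a σ-invariant Gibbs measure for φ. -/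
open MeasureTheory Filter
open scoped ENNReal NNReal

namespace SFT

variable {l : ℕ}

variable {A : Matrix (Fin l) (Fin l) ℕ}

/-- A nonnegative, telescoping modulus of continuity of `φ` with respect to the number of
common initial symbols. -/
structure IsModulus (φ : SigmaA l A → ℝ) (V : ℕ → ℝ) : Prop where
  nonneg : ∀ m, 0 ≤ V m
  abs_sub_le : ∀ (ω υ : SigmaA l A) (m : ℕ),
    (∀ i < m, ω.1 i = υ.1 i) → |φ ω - φ υ| ≤ V m - V (m + 1)

theorem HolderCont.exists_isModulus [Nonempty (SigmaA l A)] {φ : SigmaA l A → ℝ}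
    (hφ : HolderCont φ) : ∃ V, IsModulus φ V := by
  obtain ⟨C, s, hs, h⟩ := hφ
  set θ : ℝ := (2 : ℝ) ^ (-s) with hθ
  have hθ0 : 0 < θ := by positivity
  have hθ1 : θ < 1 := Real.rpow_lt_one_of_one_lt_of_neg one_lt_two (by linarith)
  have hC : 0 ≤ C := by
    obtain ⟨x⟩ := ‹Nonempty (SigmaA l A)›
    simpa using h x x 0 (by simp)
  have h1 : 0 < 1 - θ := by linarith
  refine ⟨fun m => C / (1 - θ) * θ ^ m, fun m => by positivity, fun ω υ m hm => ?_⟩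
  refine (h ω υ m hm).trans_eq ?_
  have : (2 : ℝ) ^ (-(s * m)) = θ ^ m := by
    rw [hθ, ← Real.rpow_mul_natCast (by norm_num), neg_mul]
  rw [this]
  field_simp
  ring

theorem IsModulus.exists_bound [Nonempty (SigmaA l A)] {φ : SigmaA l A → ℝ} {V : ℕ → ℝ}
    (hV : IsModulus φ V) : ∃ M, ∀ x, |φ x| ≤ M := by
  obtain ⟨x₀⟩ := ‹Nonempty (SigmaA l A)›
  refine ⟨|φ x₀| + (V 0 - V 1), fun x => ?_⟩
  have h1 := hV.abs_sub_le x x₀ 0 (by simp)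
  have h2 := abs_sub_abs_le_abs_sub (φ x) (φ x₀)
  linarith

/-- The sequence `x` with the symbol `i` put in front of it. -/
def prepend (i : Fin l) (x : SigmaA l A) (h : A i (x.1 0) = 1) : SigmaA l A :=
  ⟨fun n => Nat.casesOn n i x.1, fun k => by cases k; exacts [h, x.2 _]⟩

@[simp] theorem prepend_zero (i : Fin l) (x : SigmaA l A) (h) : (prepend i x h).1 0 = i := rfl

@[simp] theorem prepend_succ (i : Fin l) (x : SigmaA l A) (h) (n : ℕ) :
    (prepend i x h).1 (n + 1) = x.1 n := rfl

@[simp] theorem shift_prepend (i : Fin l) (x : SigmaA l A) (h) : shift (prepend i x h) = x := rfl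

theorem shift_apply (x : SigmaA l A) (n : ℕ) : (shift x).1 n = x.1 (n + 1) := rfl

theorem rel_shift (x : SigmaA l A) : A (x.1 0) ((shift x).1 0) = 1 := x.2 0

theorem prepend_shift (x : SigmaA l A) : prepend (x.1 0) (shift x) (rel_shift x) = x := by
  apply Subtype.ext
  funext n
  cases n <;> rfl

theorem birkhoff_succ (φ : SigmaA l A → ℝ) (k : ℕ) (x : SigmaA l A) :
    birkhoff φ (k + 1) x = φ x + birkhoff φ k (shift x) := by
  simp [birkhoff, Finset.sum_range_succ', Function.iterate_succ_apply, add_comm]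

theorem birkhoff_add (φ : SigmaA l A → ℝ) (m n : ℕ) (x : SigmaA l A) :
    birkhoff φ (m + n) x = birkhoff φ m x + birkhoff φ n (shift^[m] x) := by
  simp [birkhoff, Finset.sum_range_add, ← Function.iterate_add_apply, add_comm]

theorem abs_birkhoff_le {φ : SigmaA l A → ℝ} {M : ℝ} (hM : ∀ x, |φ x| ≤ M) (n : ℕ)
    (x : SigmaA l A) : |birkhoff φ n x| ≤ n * M := by
  refine (Finset.abs_sum_le_sum_abs _ _).trans ?_
  refine (Finset.sum_le_sum fun i _ => hM _).trans_eq ?_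
  simp

theorem IsModulus.abs_birkhoff_sub_le {φ : SigmaA l A → ℝ} {V : ℕ → ℝ} (hV : IsModulus φ V)
    (k : ℕ) (ω υ : SigmaA l A) (h : ∀ i < k, ω.1 i = υ.1 i) :
    |birkhoff φ k ω - birkhoff φ k υ| ≤ V 1 - V (k + 1) := by
  induction k generalizing ω υ with
  | zero => simp [birkhoff]
  | succ k ih =>
    have h1 := hV.abs_sub_le ω υ (k + 1) h
    have h2 := ih (shift ω) (shift υ) fun i hi => h (i + 1) (by omega)
    rw [birkhoff_succ, birkhoff_succ]
    rw [abs_le] at *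
    constructor <;> linarith

/-- The Ruelle transfer operator of the potential `φ`. -/
noncomputable def transfer (φ : SigmaA l A → ℝ) : Module.End ℝ (SigmaA l A → ℝ) where
  toFun f x := ∑ i, if h : A i (x.1 0) = 1 then
    Real.exp (φ (prepend i x h)) * f (prepend i x h) else 0
  map_add' f g := by
    funext x
    simp only [Pi.add_apply, ← Finset.sum_add_distrib]
    refine Finset.sum_congr rfl fun i _ => ?_
    split_ifs <;> ring
  map_smul' c f := by
    funext x
    simp only [Pi.smul_apply, smul_eq_mul, RingHom.id_apply, Finset.mul_sum]
    refine Finset.sum_congr rfl fun i _ => ?_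
    split_ifs <;> ring

theorem transfer_apply (φ f : SigmaA l A → ℝ) (x : SigmaA l A) :
    transfer φ f x = ∑ i, if h : A i (x.1 0) = 1 then
      Real.exp (φ (prepend i x h)) * f (prepend i x h) else 0 := rfl

theorem transfer_mono (φ : SigmaA l A → ℝ) : Monotone (transfer φ) := by
  intro f g h x
  rw [transfer_apply, transfer_apply]
  refine Finset.sum_le_sum fun i _ => ?_
  split_ifs
  · exact mul_le_mul_of_nonneg_left (h _) (Real.exp_pos _).le
  · rfl

theorem transfer_pow_mono (φ : SigmaA l A → ℝ) (n : ℕ) : Monotone (transfer φ ^ n) := by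
  induction n with
  | zero => exact fun f g h => h
  | succ n ih => rw [pow_succ]; exact ih.comp (transfer_mono φ)

theorem transfer_pow_add (φ f : SigmaA l A → ℝ) (m n : ℕ) :
    (transfer φ ^ (m + n)) f = (transfer φ ^ m) ((transfer φ ^ n) f) := by
  rw [pow_add, Module.End.mul_apply]

theorem transfer_pow_nonneg (φ : SigmaA l A → ℝ) (n : ℕ) {f : SigmaA l A → ℝ} (hf : 0 ≤ f) :
    0 ≤ (transfer φ ^ n) f := by
  simpa using transfer_pow_mono φ n hf

theorem transfer_pow_le (φ : SigmaA l A → ℝ) (n : ℕ) {f g : SigmaA l A → ℝ} {c : ℝ}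
    (h : ∀ x, f x ≤ c * g x) (x : SigmaA l A) :
    (transfer φ ^ n) f x ≤ c * (transfer φ ^ n) g x := by
  have := transfer_pow_mono φ n (a := f) (b := c • g) h x
  simpa using this

theorem le_transfer_pow (φ : SigmaA l A → ℝ) (n : ℕ) {f g : SigmaA l A → ℝ} {c : ℝ}
    (h : ∀ x, c * g x ≤ f x) (x : SigmaA l A) :
    c * (transfer φ ^ n) g x ≤ (transfer φ ^ n) f x := by
  have := transfer_pow_mono φ n (a := c • g) (b := f) h x
  simpa using this

theorem transfer_comp_shift_mul (φ f g : SigmaA l A → ℝ) :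
    transfer φ ((f ∘ shift) * g) = f * transfer φ g := by
  funext x
  simp only [Pi.mul_apply, transfer_apply, Finset.mul_sum]
  refine Finset.sum_congr rfl fun i _ => ?_
  split_ifs
  · simp; ring
  · simp

theorem transfer_pow_comp_shift_mul (φ f g : SigmaA l A → ℝ) (n : ℕ) :
    (transfer φ ^ n) ((f ∘ shift^[n]) * g) = f * (transfer φ ^ n) g := by
  induction n generalizing g with
  | zero => rfl
  | succ n ih =>
    rw [pow_succ, Module.End.mul_apply, Function.iterate_succ, ← Function.comp_assoc,
      transfer_comp_shift_mul, ih, Module.End.mul_apply]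

theorem exp_birkhoff_mul_le_transfer_pow (φ : SigmaA l A → ℝ) (n : ℕ) {f : SigmaA l A → ℝ}
    (hf : 0 ≤ f) (y : SigmaA l A) :
    Real.exp (birkhoff φ n y) * f y ≤ (transfer φ ^ n) f (shift^[n] y) := by
  induction n generalizing f y with
  | zero => simp [birkhoff]
  | succ n ih =>
    have h1 : Real.exp (φ y) * f y ≤ transfer φ f (shift y) := by
      rw [transfer_apply]
      have := Finset.single_le_sum (s := Finset.univ) (f := fun i =>
        if h : A i ((shift y).1 0) = 1 then
          Real.exp (φ (prepend i (shift y) h)) * f (prepend i (shift y) h) else 0)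
        (fun i _ => by
          split_ifs
          exacts [mul_nonneg (Real.exp_pos _).le (hf _), le_rfl]) (Finset.mem_univ (y.1 0))
      simpa only [rel_shift, dif_pos, prepend_shift] using this
    have h2 := ih (f := transfer φ f) (by simpa using transfer_mono φ hf) (shift y)
    rw [pow_succ, Module.End.mul_apply, Function.iterate_succ_apply, birkhoff_succ, add_comm,
      Real.exp_add, mul_assoc]
    exact (mul_le_mul_of_nonneg_left h1 (Real.exp_pos _).le).trans h2

theorem transfer_one_le {φ : SigmaA l A → ℝ} {M : ℝ} (hM : ∀ x, |φ x| ≤ M) (x : SigmaA l A) :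
    transfer φ 1 x ≤ l * Real.exp M := by
  rw [transfer_apply]
  calc _ ≤ ∑ _i : Fin l, Real.exp M := by
        refine Finset.sum_le_sum fun i _ => ?_
        split_ifs
        · simpa using (le_abs_self _).trans (hM _)
        · positivity
    _ = _ := by simp

theorem transfer_pow_one_le {φ : SigmaA l A → ℝ} {M : ℝ} (hM : ∀ x, |φ x| ≤ M) (n : ℕ)
    (x : SigmaA l A) : (transfer φ ^ n) 1 x ≤ (l * Real.exp M) ^ n := by
  induction n generalizing x with
  | zero => simp
  | succ n ih =>
    rw [pow_succ, Module.End.mul_apply, pow_succ, mul_comm]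
    refine (transfer_pow_le φ n (g := 1) (c := l * Real.exp M)
      (fun y => by simpa using transfer_one_le hM y) x).trans ?_
    exact mul_le_mul_of_nonneg_left (ih x) (by positivity)

/-- The set of sequences sharing their first `k` symbols with `ω`. -/
def ball (ω : SigmaA l A) (k : ℕ) : Set (SigmaA l A) := {x | ∀ i < k, x.1 i = ω.1 i}

theorem cylinder_wordPrefix (ω : SigmaA l A) (k : ℕ) :
    cylinder A (wordPrefix ω k) = ball ω k := by
  ext x
  simp [cylinder, wordPrefix, ball]

theorem IsModulus.transfer_pow_one_le_of_agree {φ : SigmaA l A → ℝ} {V : ℕ → ℝ}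
    (hV : IsModulus φ V) (n m : ℕ) (x y : SigmaA l A) (h : ∀ i < m + 1, x.1 i = y.1 i) :
    (transfer φ ^ n) 1 x ≤ Real.exp (V (m + 2)) * (transfer φ ^ n) 1 y := by
  induction n generalizing x y m with
  | zero => simpa using hV.nonneg _
  | succ n ih =>
    rw [pow_succ', Module.End.mul_apply, transfer_apply, transfer_apply, Finset.mul_sum]
    refine Finset.sum_le_sum fun i _ => ?_
    have h0 : x.1 0 = y.1 0 := h 0 (by omega)
    by_cases hi : A i (y.1 0) = 1
    · have hi' : A i (x.1 0) = 1 := by rw [h0, hi]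
      rw [dif_pos hi, dif_pos hi']
      have hag : ∀ j < m + 1 + 1, (prepend i x hi').1 j = (prepend i y hi).1 j := by
        rintro (_ | j) hj
        · rfl
        · exact h j (by omega)
      have h1 := ih (m + 1) _ _ hag
      have h2 := (abs_le.1 (hV.abs_sub_le _ _ _ hag)).2
      have h3 : 0 ≤ (transfer φ ^ n) 1 (prepend i y hi) :=
        transfer_pow_nonneg φ n zero_le_one _
      calc _ ≤ Real.exp (φ (prepend i x hi')) *
            (Real.exp (V (m + 1 + 2)) * (transfer φ ^ n) 1 (prepend i y hi)) := by gcongr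
        _ = Real.exp (φ (prepend i x hi') + V (m + 1 + 2)) *
            (transfer φ ^ n) 1 (prepend i y hi) := by rw [Real.exp_add]; ring
        _ ≤ Real.exp (V (m + 2) + φ (prepend i y hi)) *
            (transfer φ ^ n) 1 (prepend i y hi) := by
          gcongr ?_ * _
          rw [Real.exp_le_exp]
          have e1 : m + 1 + 1 = m + 2 := rfl
          have e2 : m + 1 + 2 = m + 2 + 1 := rfl
          rw [e1] at h2
          rw [e2]
          linarith
        _ = _ := by rw [Real.exp_add]; ring
    · have hi' : ¬ A i (x.1 0) = 1 := by rwa [h0]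
      rw [dif_neg hi, dif_neg hi', mul_zero]

theorem IsModulus.transfer_pow_indicator_le {φ : SigmaA l A → ℝ} {V : ℕ → ℝ}
    (hV : IsModulus φ V) (k : ℕ) (ω x : SigmaA l A) :
    (transfer φ ^ k) ((ball ω k).indicator 1) x ≤
      Real.exp (birkhoff φ k ω + (V 1 - V (k + 1))) := by
  induction k generalizing ω x with
  | zero => simp [birkhoff, ball]
  | succ k ih =>
    rw [pow_succ, Module.End.mul_apply]
    set c := Real.exp (φ ω + (V (k + 1) - V (k + 1 + 1))) with hc
    have key : ∀ y, transfer φ ((ball ω (k + 1)).indicator 1) y ≤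
        c * (ball (shift ω) k).indicator 1 y := by
      intro y
      have hcn : 0 ≤ c * (ball (shift ω) k).indicator 1 y :=
        mul_nonneg (Real.exp_pos _).le (Set.indicator_nonneg (fun _ _ => zero_le_one) _)
      rw [transfer_apply, Finset.sum_eq_single_of_mem (ω.1 0) (Finset.mem_univ _)]
      · split_ifs with h
        · by_cases hy : prepend (ω.1 0) y h ∈ ball ω (k + 1)
          · have hy' : y ∈ ball (shift ω) k := fun i hi => hy (i + 1) (by omega)
            have := (abs_le.1 (hV.abs_sub_le _ _ _ hy)).2
            rw [Set.indicator_of_mem hy, Set.indicator_of_mem hy', hc]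
            simp only [Pi.one_apply, mul_one, Real.exp_le_exp]
            linarith
          · rw [Set.indicator_of_notMem hy, mul_zero]
            exact hcn
        · exact hcn
      · intro i _ hi
        split_ifs with h
        · rw [Set.indicator_of_notMem, mul_zero]
          exact fun hy => hi (hy 0 (by omega))
        · rfl
    refine (transfer_pow_le φ k key x).trans ?_
    refine (mul_le_mul_of_nonneg_left (ih (shift ω) x) (Real.exp_pos _).le).trans_eq ?_
    rw [← Real.exp_add, birkhoff_succ]
    congr 1
    ring

theorem exists_mem_ball_iterate_shift_eq (ω z : SigmaA l A) (k : ℕ) (h : z.1 0 = ω.1 k) :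
    ∃ y ∈ ball ω k, shift^[k] y = z := by
  induction k generalizing ω with
  | zero => exact ⟨z, by simp [ball], rfl⟩
  | succ k ih =>
    obtain ⟨y, hy, hyz⟩ := ih (shift ω) h
    have h0 : A (ω.1 0) (y.1 0) = 1 := by
      have : y.1 0 = ω.1 1 := by
        cases k with
        | zero => rw [show y = z from hyz, h]
        | succ k => exact hy 0 (by omega)
      rw [this]
      exact ω.2 0
    refine ⟨prepend (ω.1 0) y h0, ?_, ?_⟩
    · rintro (_ | i) hi
      · rfl
      · exact hy i (by omega)
    · rw [Function.iterate_succ_apply, shift_prepend, hyz]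

theorem Primitive.eq_one_of_pos (hA : Primitive A) {i j : Fin l} (h : 0 < A i j) :
    A i j = 1 := (hA.1 i j).resolve_left h.ne'

theorem Primitive.exists_preimage (hA : Primitive A) (n : ℕ) (a : Fin l) (x : SigmaA l A)
    (h : 0 < (A ^ n) a (x.1 0)) : ∃ z : SigmaA l A, z.1 0 = a ∧ shift^[n] z = x := by
  induction n generalizing a with
  | zero =>
    refine ⟨x, ?_, rfl⟩
    by_contra hne
    simp [Ne.symm hne] at h
  | succ n ih =>
    rw [pow_succ', Matrix.mul_apply] at h
    obtain ⟨b, -, hb⟩ := Finset.exists_ne_zero_of_sum_ne_zero h.ne'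
    obtain ⟨z, hz, hzx⟩ := ih b (Nat.pos_of_ne_zero (right_ne_zero_of_mul hb))
    have hab : A a (z.1 0) = 1 := by
      rw [hz]; exact hA.eq_one_of_pos (Nat.pos_of_ne_zero (left_ne_zero_of_mul hb))
    exact ⟨prepend a z hab, rfl, by rw [Function.iterate_succ_apply, shift_prepend, hzx]⟩

theorem Primitive.nonempty (hA : Primitive A) (hl : 0 < l) : Nonempty (SigmaA l A) := by
  have hrow : ∀ i, ∃ j, A i j = 1 := by
    intro i
    obtain ⟨n, hn, hpos⟩ := hA.2
    obtain ⟨n, rfl⟩ := Nat.exists_eq_succ_of_ne_zero hn.ne'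
    have h := hpos i i
    rw [pow_succ', Matrix.mul_apply] at h
    obtain ⟨b, -, hb⟩ := Finset.exists_ne_zero_of_sum_ne_zero h.ne'
    exact ⟨b, hA.eq_one_of_pos (Nat.pos_of_ne_zero (left_ne_zero_of_mul hb))⟩
  choose s hs using hrow
  refine ⟨⟨fun n => s^[n] ⟨0, hl⟩, fun k => ?_⟩⟩
  simpa only [Function.iterate_succ_apply'] using hs _

theorem exists_linear_approx {u : ℕ → ℝ} {d : ℝ} (h : ∀ m n, |u (m + n) - u m - u n| ≤ d) :
    ∃ P : ℝ, ∀ n : ℕ, |u n - n * P| ≤ d := by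
  have ha : Subadditive fun n => u n + d := fun m n => by
    have := (abs_le.1 (h m n)).2
    linarith
  have hb : Subadditive fun n => -u n + d := fun m n => by
    have := (abs_le.1 (h m n)).1
    linarith
  have lin : ∀ {v : ℕ → ℝ}, Subadditive v → ∀ n, v n ≤ n * v 1 + v 0 := fun hv n => by
    simpa using hv.apply_mul_add_le n 1 0
  have h0 : |u 0| ≤ d := by
    have := h 0 0
    rwa [add_zero, sub_self, zero_sub, abs_neg] at this
  have hd : 0 ≤ d := (abs_nonneg _).trans h0
  have bdd : ∀ {v w : ℕ → ℝ}, Subadditive w → (∀ n, 0 ≤ v n + w n) → 0 ≤ w 0 →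
      BddBelow (Set.range fun n : ℕ => v n / n) := by
    intro v w hw hvw hw0
    refine ⟨-|w 1| - w 0, ?_⟩
    rintro _ ⟨n, rfl⟩
    rcases Nat.eq_zero_or_pos n with rfl | hn
    · simp only [Nat.cast_zero, div_zero]
      have := abs_nonneg (w 1)
      linarith
    · have hn1 : (1 : ℝ) ≤ n := by exact_mod_cast hn
      rw [le_div_iff₀ (by linarith)]
      have h1 := lin hw n
      have h2 := hvw n
      nlinarith [le_abs_self (w 1)]
  have h0' := abs_le.1 h0
  have ba := bdd (v := fun n => u n + d) hb (fun n => by linarith) (by linarith)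
  have bb := bdd (v := fun n => -u n + d) ha (fun n => by linarith) (by linarith)
  have hlim : hb.lim = -ha.lim := by
    have t1 := ha.tendsto_lim ba
    have t2 := hb.tendsto_lim bb
    have t3 : Tendsto (fun n : ℕ => 2 * d / (n : ℝ)) atTop (nhds 0) :=
      tendsto_const_div_atTop_nhds_zero_nat _
    have := tendsto_nhds_unique (t3.congr fun n => by ring) (t1.add t2)
    linarith
  refine ⟨ha.lim, fun n => ?_⟩
  rcases Nat.eq_zero_or_pos n with rfl | hn
  · simpa using h0
  have hn' : (0 : ℝ) < n := by exact_mod_cast hn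
  have l1 := ha.lim_le_div ba hn.ne'
  have l2 := hb.lim_le_div bb hn.ne'
  rw [hlim, le_div_iff₀ hn'] at l2
  rw [le_div_iff₀ hn'] at l1
  rw [abs_le]
  constructor <;> linarith

theorem IsModulus.exists_transfer_pow_one_le_mul {φ : SigmaA l A → ℝ} {V : ℕ → ℝ}
    (hV : IsModulus φ V) (hA : Primitive A) {M : ℝ} (hM : ∀ x, |φ x| ≤ M) :
    ∃ D : ℝ, ∀ (n : ℕ) (x y : SigmaA l A),
      (transfer φ ^ n) 1 x ≤ D * (transfer φ ^ n) 1 y := by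
  obtain ⟨N, -, hN⟩ := hA.2
  refine ⟨Real.exp (V 2) * (Real.exp (N * M) * (l * Real.exp M) ^ N), fun n x y => ?_⟩
  obtain ⟨z, hz, hzy⟩ := hA.exists_preimage N (x.1 0) y (hN _ _)
  have h1 := hV.transfer_pow_one_le_of_agree n 0 x z (by simp [hz])
  have h2 := exp_birkhoff_mul_le_transfer_pow φ N
    (transfer_pow_nonneg φ n (zero_le_one (α := SigmaA l A → ℝ))) z
  rw [hzy, ← transfer_pow_add, add_comm, transfer_pow_add] at h2
  have h3 := transfer_pow_le φ n (f := (transfer φ ^ N) 1) (g := 1) (c := (l * Real.exp M) ^ N)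
    (fun x => by simpa using transfer_pow_one_le hM N x) y
  have h4 := (abs_le.1 (abs_birkhoff_le hM N z)).1
  have h5 : 0 ≤ (transfer φ ^ n) 1 z := transfer_pow_nonneg φ n zero_le_one z
  have h6 : (transfer φ ^ n) 1 z ≤
      Real.exp (N * M) * (Real.exp (birkhoff φ N z) * (transfer φ ^ n) 1 z) := by
    rw [← mul_assoc, ← Real.exp_add]
    exact le_mul_of_one_le_left h5 (Real.one_le_exp (by linarith))
  calc _ ≤ Real.exp (V 2) * (transfer φ ^ n) 1 z := h1
    _ ≤ Real.exp (V 2) *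
        (Real.exp (N * M) * ((l * Real.exp M) ^ N * (transfer φ ^ n) 1 y)) := by
      gcongr
      exact h6.trans (mul_le_mul_of_nonneg_left (h2.trans h3) (Real.exp_pos _).le)
    _ = _ := by ring

theorem IsModulus.exists_pressure [Nonempty (SigmaA l A)] {φ : SigmaA l A → ℝ} {V : ℕ → ℝ}
    (hV : IsModulus φ V) (hA : Primitive A) {M : ℝ} (hM : ∀ x, |φ x| ≤ M) :
    ∃ D P : ℝ, 0 < D ∧ ∀ (n : ℕ) (x : SigmaA l A),
      Real.exp (n * P) ≤ D * (transfer φ ^ n) 1 x ∧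
        (transfer φ ^ n) 1 x ≤ D * Real.exp (n * P) := by
  obtain ⟨D, hD⟩ := hV.exists_transfer_pow_one_le_mul hA hM
  obtain ⟨x₀⟩ := ‹Nonempty (SigmaA l A)›
  have hD1 : 1 ≤ D := by simpa using hD 0 x₀ x₀
  have hD0 : 0 < D := by linarith
  have hpos : ∀ n x, 0 < (transfer φ ^ n) 1 x := by
    intro n x
    have h1 := exp_birkhoff_mul_le_transfer_pow φ n (zero_le_one (α := SigmaA l A → ℝ)) x
    have h2 := h1.trans (hD n _ x)
    rw [Pi.one_apply, mul_one] at h2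
    exact pos_of_mul_pos_right ((Real.exp_pos _).trans_le h2) hD0.le
  set Z : ℕ → ℝ := fun n => (transfer φ ^ n) 1 x₀ with hZ
  have hZ0 : ∀ n, 0 < Z n := fun n => hpos n x₀
  have hquasi : ∀ m n, |Real.log (Z (m + n)) - Real.log (Z m) - Real.log (Z n)| ≤
      Real.log D := by
    intro m n
    have h1 : Z (m + n) ≤ D * Z n * Z m := by
      simp only [hZ, transfer_pow_add]
      exact transfer_pow_le φ m (fun x => by simpa using hD n x x₀) x₀
    have h2 : D⁻¹ * Z n * Z m ≤ Z (m + n) := by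
      simp only [hZ, transfer_pow_add]
      refine le_transfer_pow φ m (fun x => ?_) x₀
      rw [Pi.one_apply, mul_one, inv_mul_le_iff₀ hD0]
      exact hD n x₀ x
    have a1 := (hZ0 n).ne'
    have a2 := (hZ0 m).ne'
    have l1 := Real.log_le_log (hZ0 _) h1
    have l2 := Real.log_le_log (mul_pos (mul_pos (inv_pos.2 hD0) (hZ0 n)) (hZ0 m)) h2
    rw [Real.log_mul (mul_ne_zero hD0.ne' a1) a2, Real.log_mul hD0.ne' a1] at l1
    rw [Real.log_mul (mul_ne_zero (inv_ne_zero hD0.ne') a1) a2,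
      Real.log_mul (inv_ne_zero hD0.ne') a1, Real.log_inv] at l2
    rw [abs_le]
    constructor <;> linarith
  obtain ⟨P, hP⟩ := exists_linear_approx (u := fun n => Real.log (Z n)) hquasi
  refine ⟨D * D, P, by positivity, fun n x => ?_⟩
  obtain ⟨p1, p2⟩ := abs_le.1 (hP n)
  have q1 : Real.exp (n * P) ≤ D * Z n := by
    rw [← Real.log_le_log_iff (Real.exp_pos _) (mul_pos hD0 (hZ0 n)), Real.log_exp,
      Real.log_mul hD0.ne' (hZ0 n).ne']
    linarith
  have q2 : Z n ≤ D * Real.exp (n * P) := by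
    rw [← Real.log_le_log_iff (hZ0 n) (by positivity), Real.log_mul hD0.ne' (Real.exp_pos _).ne',
      Real.log_exp]
    linarith
  constructor
  · rw [mul_assoc]
    exact q1.trans (mul_le_mul_of_nonneg_left (hD n x₀ x) hD0.le)
  · rw [mul_assoc]
    exact (hD n x x₀).trans (mul_le_mul_of_nonneg_left q2 hD0.le)

theorem IsModulus.exp_birkhoff_le_transfer_pow_indicator {φ : SigmaA l A → ℝ} {V : ℕ → ℝ}
    (hV : IsModulus φ V) (hA : Primitive A) {M : ℝ} (hM : ∀ x, |φ x| ≤ M) {N : ℕ}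
    (hN : ∀ i j, 0 < (A ^ N) i j) (k : ℕ) (ω x : SigmaA l A) :
    Real.exp (birkhoff φ k ω - (V 1 + N * M)) ≤
      (transfer φ ^ (N + k)) ((ball ω k).indicator 1) x := by
  obtain ⟨z, hz, hzx⟩ := hA.exists_preimage N (ω.1 k) x (hN _ _)
  obtain ⟨y, hy, hyz⟩ := exists_mem_ball_iterate_shift_eq ω z k hz
  have h1 := exp_birkhoff_mul_le_transfer_pow φ (N + k)
    (f := (ball ω k).indicator 1) (Set.indicator_nonneg fun _ _ => zero_le_one) y
  rw [Function.iterate_add_apply, hyz, hzx, Set.indicator_of_mem hy, Pi.one_apply, mul_one,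
    add_comm N k, birkhoff_add, hyz] at h1
  rw [add_comm N k]
  refine le_trans (Real.exp_le_exp.2 ?_) h1
  have h2 := (abs_le.1 (hV.abs_birkhoff_sub_le k y ω hy)).1
  have h3 := (abs_le.1 (abs_birkhoff_le hM N z)).1
  have h4 := hV.nonneg (k + 1)
  linarith

theorem IsModulus.exists_gibbs_bounds [Nonempty (SigmaA l A)] {φ : SigmaA l A → ℝ} {V : ℕ → ℝ}
    (hV : IsModulus φ V) (hA : Primitive A) :
    ∃ (c P : ℝ) (N : ℕ), 1 < c ∧ ∀ (ω x : SigmaA l A) (k j m : ℕ), j + k + N ≤ m →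
      c⁻¹ * Real.exp (birkhoff φ k ω - k * P) * (transfer φ ^ m) 1 x ≤
          (transfer φ ^ m) ((ball ω k).indicator 1 ∘ shift^[j]) x ∧
        (transfer φ ^ m) ((ball ω k).indicator 1 ∘ shift^[j]) x ≤
          c * Real.exp (birkhoff φ k ω - k * P) * (transfer φ ^ m) 1 x := by
  obtain ⟨M, hM⟩ := hV.exists_bound
  obtain ⟨D, P, hD, hP⟩ := hV.exists_pressure hA hM
  obtain ⟨N, -, hN⟩ := hA.2
  set c₁ := D ^ 3 * Real.exp (V 1) with hc₁
  set c₂ := D ^ 3 * Real.exp (V 1 + N * M + N * P) with hc₂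
  have hc₁0 : 0 < c₁ := by positivity
  have hc₂0 : 0 < c₂ := by positivity
  refine ⟨1 + c₁ + c₂, P, N, by linarith, fun ω x k j m hm => ?_⟩
  have hZ : 0 ≤ (transfer φ ^ m) 1 x := transfer_pow_nonneg φ m zero_le_one x
  have hsplit : ∀ r, (transfer φ ^ (r + j)) ((ball ω k).indicator 1 ∘ shift^[j]) =
      (transfer φ ^ r) ((ball ω k).indicator 1 * (transfer φ ^ j) 1) := by
    intro r
    rw [transfer_pow_add, ← transfer_pow_comp_shift_mul, mul_one]
  have hind : ∀ y, 0 ≤ (ball ω k).indicator (1 : SigmaA l A → ℝ) y :=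
    Set.indicator_nonneg fun _ _ => zero_le_one
  constructor
  · obtain ⟨r, rfl⟩ : ∃ r, m = r + (N + k) + j := ⟨m - j - k - N, by omega⟩
    have s1 : D⁻¹ * Real.exp (j * P) *
        (transfer φ ^ (r + (N + k))) ((ball ω k).indicator 1) x ≤
        (transfer φ ^ (r + (N + k) + j)) ((ball ω k).indicator 1 ∘ shift^[j]) x := by
      rw [hsplit]
      refine le_transfer_pow φ _ (fun y => ?_) x
      rw [Pi.mul_apply, mul_comm]
      refine mul_le_mul_of_nonneg_left ?_ (hind y)
      rw [inv_mul_le_iff₀ hD]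
      exact (hP j y).1
    have s2 : Real.exp (birkhoff φ k ω - (V 1 + N * M)) * (transfer φ ^ r) 1 x ≤
        (transfer φ ^ (r + (N + k))) ((ball ω k).indicator 1) x := by
      rw [transfer_pow_add]
      refine le_transfer_pow φ r (fun y => ?_) x
      simpa using hV.exp_birkhoff_le_transfer_pow_indicator hA hM hN k ω y
    have s3 : D⁻¹ * Real.exp (r * P) ≤ (transfer φ ^ r) 1 x := by
      rw [inv_mul_le_iff₀ hD]
      exact (hP r x).1
    have s4 := (hP (r + (N + k) + j) x).2
    calc _ ≤ c₂⁻¹ * Real.exp (birkhoff φ k ω - k * P) *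
          (D * Real.exp ((r + (N + k) + j : ℕ) * P)) := by
          gcongr
          linarith
      _ = D⁻¹ * Real.exp (j * P) * (Real.exp (birkhoff φ k ω - (V 1 + N * M)) *
          (D⁻¹ * Real.exp (r * P))) := by
          have e : Real.exp (birkhoff φ k ω - k * P) *
              Real.exp ((r + (N + k) + j : ℕ) * P) =
              Real.exp (V 1 + N * M + N * P) * (Real.exp (j * P) *
                (Real.exp (birkhoff φ k ω - (V 1 + N * M)) * Real.exp (r * P))) := by
            simp only [← Real.exp_add]
            congr 1
            push_cast
            ring
          calc _ = c₂⁻¹ * D * (Real.exp (birkhoff φ k ω - k * P) *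
              Real.exp ((r + (N + k) + j : ℕ) * P)) := by ring
            _ = _ := by
              rw [e, hc₂]
              field_simp
      _ ≤ D⁻¹ * Real.exp (j * P) * (Real.exp (birkhoff φ k ω - (V 1 + N * M)) *
          (transfer φ ^ r) 1 x) := by gcongr
      _ ≤ D⁻¹ * Real.exp (j * P) *
          (transfer φ ^ (r + (N + k))) ((ball ω k).indicator 1) x := by gcongr
      _ ≤ _ := s1
  · obtain ⟨r, rfl⟩ : ∃ r, m = r + k + j := ⟨m - j - k, by omega⟩
    have s1 : (transfer φ ^ (r + k + j)) ((ball ω k).indicator 1 ∘ shift^[j]) x ≤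
        D * Real.exp (j * P) * (transfer φ ^ (r + k)) ((ball ω k).indicator 1) x := by
      rw [hsplit]
      refine transfer_pow_le φ _ (fun y => ?_) x
      rw [Pi.mul_apply, mul_comm]
      exact mul_le_mul_of_nonneg_right (hP j y).2 (hind y)
    have s2 : (transfer φ ^ (r + k)) ((ball ω k).indicator 1) x ≤
        Real.exp (birkhoff φ k ω + V 1) * (transfer φ ^ r) 1 x := by
      rw [transfer_pow_add]
      refine transfer_pow_le φ r (fun y => ?_) x
      rw [Pi.one_apply, mul_one]
      refine (hV.transfer_pow_indicator_le k ω y).trans (Real.exp_le_exp.2 ?_)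
      linarith [hV.nonneg (k + 1)]
    have s3 := (hP r x).2
    have s4 := (hP (r + k + j) x).1
    calc _ ≤ D * Real.exp (j * P) * (transfer φ ^ (r + k)) ((ball ω k).indicator 1) x := s1
      _ ≤ D * Real.exp (j * P) * (Real.exp (birkhoff φ k ω + V 1) *
          (D * Real.exp (r * P))) := by
          gcongr
          exact s2.trans (by gcongr)
      _ = D ^ 2 * Real.exp (V 1) * Real.exp (birkhoff φ k ω - k * P) *
          Real.exp ((r + k + j : ℕ) * P) := by
          have e : Real.exp (j * P) * (Real.exp (birkhoff φ k ω + V 1) * Real.exp (r * P)) =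
              Real.exp (V 1) * Real.exp (birkhoff φ k ω - k * P) *
                Real.exp ((r + k + j : ℕ) * P) := by
            simp only [← Real.exp_add]
            congr 1
            push_cast
            ring
          linear_combination D ^ 2 * e
      _ ≤ D ^ 2 * Real.exp (V 1) * Real.exp (birkhoff φ k ω - k * P) *
          (D * (transfer φ ^ (r + k + j)) 1 x) := by gcongr
      _ = c₁ * Real.exp (birkhoff φ k ω - k * P) * (transfer φ ^ (r + k + j)) 1 x := by
          rw [hc₁]; ring
      _ ≤ _ := by
          gcongr
          linarith

open scoped CompactlySupported in
/-- A sequence of positive normalized linear functionals on functions on a compact space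
converges on continuous functions, along an ultrafilter, to a Borel probability measure. -/
theorem exists_probabilityMeasure_tendsto {X : Type*} [TopologicalSpace X] [CompactSpace X]
    [T2Space X] [MeasurableSpace X] [BorelSpace X] (Λ : ℕ → (X → ℝ) →ₗ[ℝ] ℝ)
    (hpos : ∀ n f, 0 ≤ f → 0 ≤ Λ n f) (hone : ∀ n, Λ n 1 = 1) :
    ∃ (μ : Measure X) (U : Ultrafilter ℕ), IsProbabilityMeasure μ ∧ (U : Filter ℕ) ≤ atTop ∧
      ∀ f : C(X, ℝ), Tendsto (fun n => Λ n f) U (nhds (∫ x, f x ∂μ)) := by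
  let U : Ultrafilter ℕ := hyperfilter ℕ
  have hmono : ∀ n f g, f ≤ g → Λ n f ≤ Λ n g := fun n f g h => by
    have := hpos n (g - f) (sub_nonneg.2 h)
    rwa [map_sub, sub_nonneg] at this
  have hconst : ∀ n (r : ℝ), Λ n (fun _ => r) = r := fun n r => by
    have : (fun _ => r : X → ℝ) = r • 1 := by funext; simp
    rw [this, map_smul, hone, smul_eq_mul, mul_one]
  have hex : ∀ f : C(X, ℝ), ∃ a, Tendsto (fun n => Λ n f) U (nhds a) := by
    intro f
    have hmem : ∀ n, Λ n f ∈ Set.Icc (-‖f‖) ‖f‖ := fun n => by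
      constructor
      · rw [← hconst n (-‖f‖)]
        exact hmono n _ _ fun x => (abs_le.1 (f.norm_coe_le_norm x)).1
      · rw [← hconst n ‖f‖]
        exact hmono n _ _ fun x => (abs_le.1 (f.norm_coe_le_norm x)).2
    obtain ⟨a, -, ha⟩ := (isCompact_Icc (a := -‖f‖) (b := ‖f‖)).ultrafilter_le_nhds
      (U.map fun n => Λ n f) (by
        rw [Ultrafilter.coe_map, le_principal_iff]
        exact Filter.mem_map.2 (Filter.univ_mem' hmem))
    exact ⟨a, ha⟩
  choose T hT using hex
  let L : C_c(X, ℝ) →ₗ[ℝ] ℝ :=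
    { toFun := fun f => T f
      map_add' := fun f g => tendsto_nhds_unique (hT _) <|
        ((hT f).add (hT g)).congr fun n => ((Λ n).map_add f g).symm
      map_smul' := fun c f => tendsto_nhds_unique (hT _) <|
        ((hT f).const_mul c).congr fun n => ((Λ n).map_smul c f).symm }
  let Lp : C_c(X, ℝ) →ₚ[ℝ] ℝ := PositiveLinearMap.mk₀ L fun f hf =>
    ge_of_tendsto' (hT f) fun n => hpos n f hf
  have hint : ∀ f : C(X, ℝ), ∫ x, f x ∂(RealRMK.rieszMeasure Lp) = T f := fun f =>
    RealRMK.integral_rieszMeasure Lp (CompactlySupportedContinuousMap.continuousMapEquiv f)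
  refine ⟨RealRMK.rieszMeasure Lp, U, ⟨?_⟩, ?_, fun f => ?_⟩
  · have h1 := hint 1
    have h2 : T 1 = 1 := tendsto_nhds_unique (hT 1) <|
      tendsto_const_nhds.congr fun n => (hone n).symm
    simp only [ContinuousMap.one_apply, integral_const, smul_eq_mul, mul_one, h2] at h1
    exact (ENNReal.toReal_eq_one_iff _).1 h1
  · rw [← Nat.cofinite_eq_atTop]
    exact hyperfilter_le_cofinite
  · rw [hint]
    exact hT f

theorem isClopen_ball (ω : SigmaA l A) (k : ℕ) : IsClopen (ball ω k) := by
  have : ball ω k = ⋂ i ∈ Finset.range k, (fun x : SigmaA l A => x.1 i) ⁻¹' {ω.1 i} := by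
    ext x
    simp [ball]
  rw [this]
  refine isClopen_biInter_finset fun i _ => (isClopen_discrete _).preimage ?_
  exact (continuous_apply i).comp continuous_subtype_val

theorem continuous_shift : Continuous (shift : SigmaA l A → SigmaA l A) := by
  refine Continuous.subtype_mk (continuous_pi fun n => ?_) _
  exact (continuous_apply (n + 1)).comp continuous_subtype_val

instance : CompactSpace (SigmaA l A) := by
  have hset : {ω : ℕ → Fin l | ∀ k, A (ω k) (ω (k + 1)) = 1} =
      ⋂ k, (fun ω : ℕ → Fin l => (ω k, ω (k + 1))) ⁻¹' {p | A p.1 p.2 = 1} := by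
    ext; simp
  have hcl : IsClosed {ω : ℕ → Fin l | ∀ k, A (ω k) (ω (k + 1)) = 1} := by
    rw [hset]
    refine isClosed_iInter fun k => (isClosed_discrete _).preimage ?_
    fun_prop
  exact isCompact_iff_compactSpace.1 hcl.isCompact

/-- The averages along the first `n + 1` shifts of the normalized functional
`f ↦ L^{2(n+1)} f(x)`, where `L` is the transfer operator. -/
noncomputable def transferMean (φ : SigmaA l A → ℝ) (x : SigmaA l A) (n : ℕ) :
    (SigmaA l A → ℝ) →ₗ[ℝ] ℝ :=
  ((n + 1 : ℝ) * (transfer φ ^ (2 * (n + 1))) 1 x)⁻¹ • ∑ j ∈ Finset.range (n + 1),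
    LinearMap.proj x ∘ₗ (transfer φ ^ (2 * (n + 1))) ∘ₗ LinearMap.funLeft ℝ ℝ (shift^[j])

theorem transferMean_apply (φ : SigmaA l A → ℝ) (x : SigmaA l A) (n : ℕ) (f : SigmaA l A → ℝ) :
    transferMean φ x n f = ((n + 1 : ℝ) * (transfer φ ^ (2 * (n + 1))) 1 x)⁻¹ *
      ∑ j ∈ Finset.range (n + 1), (transfer φ ^ (2 * (n + 1))) (f ∘ shift^[j]) x := by
  simp [transferMean, LinearMap.sum_apply, LinearMap.funLeft]

theorem abs_transfer_pow_le (φ : SigmaA l A → ℝ) (m : ℕ) {f : SigmaA l A → ℝ} {K : ℝ}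
    (hf : ∀ y, |f y| ≤ K) (x : SigmaA l A) :
    |(transfer φ ^ m) f x| ≤ K * (transfer φ ^ m) 1 x := by
  rw [abs_le, ← neg_mul]
  exact ⟨le_transfer_pow φ m (fun y => by simpa using (abs_le.1 (hf y)).1) x,
    transfer_pow_le φ m (fun y => by simpa using (abs_le.1 (hf y)).2) x⟩

theorem abs_transferMean_comp_shift_sub_le {φ : SigmaA l A → ℝ} {x : SigmaA l A} {n : ℕ}
    (hZ : 0 < (transfer φ ^ (2 * (n + 1))) 1 x) {f : SigmaA l A → ℝ} {K : ℝ}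
    (hf : ∀ y, |f y| ≤ K) :
    |transferMean φ x n (f ∘ shift) - transferMean φ x n f| ≤ 2 * K * (1 / ((n : ℝ) + 1)) := by
  rw [transferMean_apply, transferMean_apply, ← mul_sub, ← Finset.sum_sub_distrib]
  have htel : ∑ j ∈ Finset.range (n + 1), ((transfer φ ^ (2 * (n + 1))) ((f ∘ shift) ∘ shift^[j]) x
      - (transfer φ ^ (2 * (n + 1))) (f ∘ shift^[j]) x) =
      (transfer φ ^ (2 * (n + 1))) (f ∘ shift^[n + 1]) x - (transfer φ ^ (2 * (n + 1))) f x := by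
    have := Finset.sum_range_sub
      (fun j => (transfer φ ^ (2 * (n + 1))) (f ∘ shift^[j]) x) (n + 1)
    simpa only [Function.comp_assoc, Function.iterate_succ', Function.iterate_zero,
      Function.comp_id] using this
  rw [htel]
  have h1 := abs_transfer_pow_le φ (2 * (n + 1)) (f := f ∘ shift^[n + 1]) (fun y => hf _) x
  have h2 := abs_transfer_pow_le φ (2 * (n + 1)) hf x
  have h3 := (abs_sub _ _).trans (add_le_add h1 h2)
  rw [abs_mul, abs_of_pos (by positivity), inv_mul_le_iff₀ (by positivity)]
  refine h3.trans_eq ?_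
  field_simp
  ring

/-- Every Hölder continuous potential admits a `σ`-invariant Gibbs
measure. -/
theorem exists_invariant_gibbs
    (hl : 2 ≤ l) (A : Matrix (Fin l) (Fin l) ℕ) (hA : Primitive A)
    (φ : SigmaA l A → ℝ) (hφ : HolderCont φ) :
    ∃ (μ : Measure (SigmaA l A)) (P : ℝ), IsProbabilityMeasure μ ∧ IsGibbs φ P μ ∧
      ∀ B : Set (SigmaA l A), MeasurableSet B → μ (shift ⁻¹' B) = μ B := by
  have := hA.nonempty (by omega)
  obtain ⟨V, hV⟩ := hφ.exists_isModulus
  obtain ⟨M, hM⟩ := hV.exists_bound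
  obtain ⟨D, Q, hD, hQ⟩ := hV.exists_pressure hA hM
  obtain ⟨c, P, N, hc, hgibbs⟩ := hV.exists_gibbs_bounds hA
  obtain ⟨x₀⟩ := ‹Nonempty (SigmaA l A)›
  have hZ : ∀ n, 0 < (transfer φ ^ n) 1 x₀ := fun n =>
    pos_of_mul_pos_right ((Real.exp_pos _).trans_le (hQ n x₀).1) hD.le
  obtain ⟨μ, U, hμ, hU, hlim⟩ := exists_probabilityMeasure_tendsto (transferMean φ x₀)
    (fun n f hf => by
      rw [transferMean_apply]
      have := hZ (2 * (n + 1))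
      refine mul_nonneg (by positivity) (Finset.sum_nonneg fun j _ => ?_)
      exact transfer_pow_nonneg φ _ (f := f ∘ shift^[j]) (fun y => hf (shift^[j] y)) x₀)
    (fun n => by
      have := hZ (2 * (n + 1))
      rw [transferMean_apply]
      simp only [Pi.one_comp, Finset.sum_const, Finset.card_range, nsmul_eq_mul]
      push_cast
      exact inv_mul_cancel₀ (by positivity))
  refine ⟨μ, P, hμ, ⟨c, hc, fun ω k _ => ?_⟩, ?_⟩
  · rw [cylinder_wordPrefix, le_div_iff₀ (Real.exp_pos _), div_le_iff₀ (Real.exp_pos _)]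
    have hcl := isClopen_ball ω k
    let f : C(SigmaA l A, ℝ) := ⟨(ball ω k).indicator 1,
      continuous_one.indicator (by simp [hcl.frontier_eq])⟩
    have hf : ∫ x, f x ∂μ = (μ (ball ω k)).toReal :=
      integral_indicator_one hcl.isClosed.measurableSet
    have ht := hlim f
    rw [hf] at ht
    have hev : ∀ᶠ n in (U : Filter ℕ), k + N ≤ n := hU (eventually_ge_atTop _)
    have hbound : ∀ n, k + N ≤ n →
        c⁻¹ * Real.exp (birkhoff φ k ω - k * P) ≤ transferMean φ x₀ n f ∧
          transferMean φ x₀ n f ≤ c * Real.exp (birkhoff φ k ω - k * P) := by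
      intro n hn
      have hZn := hZ (2 * (n + 1))
      have hj : ∀ j ∈ Finset.range (n + 1), j + k + N ≤ 2 * (n + 1) := fun j hj => by
        have := Finset.mem_range.1 hj
        omega
      have s1 := Finset.card_nsmul_le_sum (Finset.range (n + 1)) _ _
        fun j h => (hgibbs ω x₀ k j (2 * (n + 1)) (hj j h)).1
      have s2 := Finset.sum_le_card_nsmul (Finset.range (n + 1)) _ _
        fun j h => (hgibbs ω x₀ k j (2 * (n + 1)) (hj j h)).2
      rw [Finset.card_range, nsmul_eq_mul] at s1 s2
      push_cast at s1 s2
      rw [transferMean_apply, le_inv_mul_iff₀ (by positivity), inv_mul_le_iff₀ (by positivity)]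
      constructor
      · refine le_trans (le_of_eq ?_) s1
        ring
      · refine s2.trans_eq ?_
        ring
    exact ⟨ge_of_tendsto ht (hev.mono fun n hn => (hbound n hn).1),
      le_of_tendsto ht (hev.mono fun n hn => (hbound n hn).2)⟩
  · have hmeas : Measurable (shift : SigmaA l A → SigmaA l A) := continuous_shift.measurable
    have hmap : μ.map shift = μ := by
      have : IsProbabilityMeasure (μ.map shift) :=
        Measure.isProbabilityMeasure_map hmeas.aemeasurable
      have : SecondCountableTopology (SigmaA l A) :=
        Topology.IsEmbedding.subtypeVal.secondCountableTopology
      have : TopologicalSpace.MetrizableSpace (SigmaA l A) :=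
        TopologicalSpace.metrizableSpace_of_t3_secondCountable _
      let _ := TopologicalSpace.metrizableSpaceMetric (SigmaA l A)
      refine ext_of_forall_integral_eq_of_IsFiniteMeasure fun f => ?_
      rw [integral_map hmeas.aemeasurable f.continuous.aestronglyMeasurable]
      have t1 := hlim ⟨f ∘ shift, f.continuous.comp continuous_shift⟩
      have t2 := hlim f.toContinuousMap
      have t3 : Tendsto (fun n => transferMean φ x₀ n (f ∘ shift) - transferMean φ x₀ n f)
          U (nhds 0) := by
        have h0 : Tendsto (fun n : ℕ => 2 * ‖f‖ * (1 / ((n : ℝ) + 1))) U (nhds 0) := by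
          simpa using (tendsto_one_div_add_atTop_nhds_zero_nat (𝕜 := ℝ)).const_mul (2 * ‖f‖)
            |>.mono_left hU
        exact squeeze_zero_norm (fun n => abs_transferMean_comp_shift_sub_le (hZ _)
          fun y => f.norm_coe_le_norm y) h0
      exact sub_eq_zero.1 (tendsto_nhds_unique (t1.sub t2) t3)
    intro B hB
    conv_rhs => rw [← hmap]
    rw [Measure.map_apply hmeas hB]

end SFT
end
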